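/- Let X be a compact metric space, θ: X → X a homeomorphism, and ψ0: X → GL(d,ℝ) continuous. The cocycle admits a dominated splitting E ⊕ F of index p if and only if there exist c > 0 and μ > 0 such that σ_{p+1}(ψ^n_x)/σ_p(ψ^n_x) ≤ c·e^{−μn} for every x ∈ X and every n ≥ 0. Moreover, in that case the bundles are given by F_x = lim_{n→+∞} U_p(ψ^n_{θ^{−n}(x)}) and E_x = lim_{n→+∞} U_{d−p}(ψ^{−n}_{θ^{n}(x)}), and these limits are uniform in x ∈ X. -/

import Mathlib

noncomputable section

open scoped Matrix RealInnerProductSpace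
open Filter Topology

namespace Paper

abbrev Euc (d : ℕ) : Type := EuclideanSpace ℝ (Fin d)

/-- The action of a `d × d` real matrix on Euclidean space. -/
def act {d : ℕ} (g : Matrix (Fin d) (Fin d) ℝ) (v : Euc d) : Euc d :=
  Matrix.toEuclideanCLM (𝕜 := ℝ) g v

/-- The operator norm of a matrix acting on Euclidean space. -/
def opNorm {d : ℕ} (g : Matrix (Fin d) (Fin d) ℝ) : ℝ :=
  ‖(Matrix.toEuclideanCLM (𝕜 := ℝ) g : Euc d →L[ℝ] Euc d)‖

/-- The underlying matrix of an element of `GL (Fin d) ℝ`. -/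
def mat {d : ℕ} (g : GL (Fin d) ℝ) : Matrix (Fin d) (Fin d) ℝ := ↑g

/-- The `p`-th singular value (`1`-indexed), via the min-max characterization:
`σ_p(g)` is the largest, over `p`-dimensional subspaces `P`, of the minimal
stretch of unit vectors of `P`. -/
def sv {d : ℕ} (g : Matrix (Fin d) (Fin d) ℝ) (p : ℕ) : ℝ :=
  sSup { r | ∃ P : Submodule ℝ (Euc d), Module.finrank ℝ P = p ∧
      r = sInf { t | ∃ v ∈ P, ‖v‖ = 1 ∧ t = ‖act g v‖ } }

/-- `g` has a gap of index `p` if `σ_p(g) > σ_{p+1}(g)`. -/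
def HasGap {d : ℕ} (g : Matrix (Fin d) (Fin d) ℝ) (p : ℕ) : Prop :=
  sv g (p + 1) < sv g p

/-- `U` is a Cartan attractor of index `p` for `g`: for some singular value
decomposition `g = k·a·l` (`k`, `l` orthogonal, `a` diagonal with decreasing
nonnegative entries), `U` is the span of the first `p` columns of `k`. -/
def IsCartanAttractor {d : ℕ} (g : Matrix (Fin d) (Fin d) ℝ) (p : ℕ)
    (U : Submodule ℝ (Euc d)) : Prop :=
  ∃ k l : Matrix (Fin d) (Fin d) ℝ, ∃ σ : Fin d → ℝ,
    k ∈ Matrix.unitaryGroup (Fin d) ℝ ∧ l ∈ Matrix.unitaryGroup (Fin d) ℝ ∧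
    (∀ i j : Fin d, i ≤ j → σ j ≤ σ i) ∧ (∀ i, 0 ≤ σ i) ∧
    g = k * Matrix.diagonal σ * l ∧
    U = Submodule.span ℝ { x : Euc d | ∃ i : Fin d, (i : ℕ) < p ∧
          x = (EuclideanSpace.equiv (Fin d) ℝ).symm (fun j => k j i) }

/-- The Cartan attractor `U_p(g)`; when `g` has a gap of index `p` it is the
unique subspace satisfying `IsCartanAttractor g p`. -/
def cartanAttractor {d : ℕ} (g : Matrix (Fin d) (Fin d) ℝ) (p : ℕ) :
    Submodule ℝ (Euc d) :=
  letI := Classical.propDecidable (∃ U, IsCartanAttractor g p U)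
  if h : ∃ U, IsCartanAttractor g p U then h.choose else ⊥

/-- The angle `∠(P,Q)` between two subspaces: the infimum of angles between
nonzero vectors of `P` and `Q`. -/
def subAngle {d : ℕ} (P Q : Submodule ℝ (Euc d)) : ℝ :=
  sInf { θ | ∃ v ∈ P, v ≠ 0 ∧ ∃ w ∈ Q, w ≠ 0 ∧ θ = InnerProductGeometry.angle v w }

/-- `sin ∠(v,w)`. -/
def sinAngle {d : ℕ} (v w : Euc d) : ℝ := Real.sin (InnerProductGeometry.angle v w)

/-- The distance `d(P,Q) = max_{v ∈ P∖{0}} min_{w ∈ Q∖{0}} sin ∠(v,w)`. -/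
def grassDist {d : ℕ} (P Q : Submodule ℝ (Euc d)) : ℝ :=
  sSup { r | ∃ v ∈ P, v ≠ 0 ∧
      r = sInf { s | ∃ w ∈ Q, w ≠ 0 ∧ s = sinAngle v w } }

/-- The image `g·P` of a subspace under a matrix. -/
def mapMat {d : ℕ} (g : Matrix (Fin d) (Fin d) ℝ) (P : Submodule ℝ (Euc d)) :
    Submodule ℝ (Euc d) :=
  P.map ((Matrix.toEuclideanCLM (𝕜 := ℝ) g : Euc d →L[ℝ] Euc d) : Euc d →ₗ[ℝ] Euc d)

/-- `m(g|_W)`, the minimal stretch of unit vectors of `W` under `g`. -/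
def minRestrict {d : ℕ} (g : Matrix (Fin d) (Fin d) ℝ) (W : Submodule ℝ (Euc d)) : ℝ :=
  sInf { t | ∃ v ∈ W, ‖v‖ = 1 ∧ t = ‖act g v‖ }

/-- `‖g|_W‖`, the maximal stretch of unit vectors of `W` under `g`. -/
def normRestrict {d : ℕ} (g : Matrix (Fin d) (Fin d) ℝ) (W : Submodule ℝ (Euc d)) : ℝ :=
  sSup { t | ∃ v ∈ W, ‖v‖ = 1 ∧ t = ‖act g v‖ }


/-- The cocycle `ψ^n_x = ψ0(θ^{n-1} x) ⋯ ψ0(θ x) · ψ0(x)`. -/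
def cocyc {X : Type*} [TopologicalSpace X] {d : ℕ} (θ : X ≃ₜ X) (ψ0 : X → GL (Fin d) ℝ) :
    ℕ → X → GL (Fin d) ℝ
  | 0, _ => 1
  | n + 1, x => ψ0 ((θ : X → X)^[n] x) * cocyc θ ψ0 n x

/-- A dominated splitting of index `p` for the cocycle over `θ` defined by `ψ0`:
an equivariant decomposition `ℝ^d = E_x ⊕ F_x` with `dim F_x = p` along which
`F` uniformly exponentially dominates `E`. -/
def IsDominatedSplitting {X : Type*} [TopologicalSpace X] {d : ℕ}
    (θ : X ≃ₜ X) (ψ0 : X → GL (Fin d) ℝ) (p : ℕ)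
    (Ef Ff : X → Submodule ℝ (Euc d)) : Prop :=
  (∀ x, Module.finrank ℝ (Ff x) = p) ∧
  (∀ x, IsCompl (Ef x) (Ff x)) ∧
  (∀ x, mapMat (mat (ψ0 x)) (Ef x) = Ef (θ x)) ∧
  (∀ x, mapMat (mat (ψ0 x)) (Ff x) = Ff (θ x)) ∧
  ∃ c > (0 : ℝ), ∃ μ > (0 : ℝ), ∀ x : X, ∀ n : ℕ,
    ∀ u ∈ Ef x, u ≠ 0 → ∀ w ∈ Ff x, w ≠ 0 →
      ‖act (mat (cocyc θ ψ0 n x)) u‖ / ‖u‖ ≤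
        c * Real.exp (-μ * (n : ℝ)) * (‖act (mat (cocyc θ ψ0 n x)) w‖ / ‖w‖)


/-- The continuous linear map of an invertible matrix. -/
def Aop {d : ℕ} (g : GL (Fin d) ℝ) : Euc d →L[ℝ] Euc d := Matrix.toEuclideanCLM (𝕜 := ℝ) (mat g)

lemma act_eq {d : ℕ} (g : GL (Fin d) ℝ) (v : Euc d) : act (mat g) v = Aop g v := rfl

lemma Aop_mul {d : ℕ} (g h : GL (Fin d) ℝ) (v : Euc d) : Aop (g * h) v = Aop g (Aop h v) := by
  simp [Aop, mat]

lemma Aop_one {d : ℕ} (v : Euc d) : Aop (1 : GL (Fin d) ℝ) v = v := by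
  simp [Aop, mat]

lemma Aop_inv {d : ℕ} (g : GL (Fin d) ℝ) (v : Euc d) : Aop g⁻¹ (Aop g v) = v := by
  rw [← Aop_mul, inv_mul_cancel, Aop_one]

lemma Aop_inv' {d : ℕ} (g : GL (Fin d) ℝ) (v : Euc d) : Aop g (Aop g⁻¹ v) = v := by
  rw [← Aop_mul, mul_inv_cancel, Aop_one]

lemma Aop_inj {d : ℕ} (g : GL (Fin d) ℝ) : Function.Injective (Aop g) :=
  Function.LeftInverse.injective (Aop_inv g)

lemma Aop_ne {d : ℕ} (g : GL (Fin d) ℝ) {v : Euc d} (hv : v ≠ 0) : Aop g v ≠ 0 := by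
  intro h
  exact hv (Aop_inj g (by rw [h, map_zero]))

lemma mem_mapMat {d : ℕ} (g : GL (Fin d) ℝ) (P : Submodule ℝ (Euc d)) (w : Euc d) :
    w ∈ mapMat (mat g) P ↔ ∃ v ∈ P, Aop g v = w := by
  simp [mapMat, Aop, Submodule.mem_map]

lemma finrank_mapMat {d : ℕ} (g : GL (Fin d) ℝ) (P : Submodule ℝ (Euc d)) :
    Module.finrank ℝ (mapMat (mat g) P) = Module.finrank ℝ P := by
  unfold mapMat
  exact (Submodule.equivMapOfInjective _ (Aop_inj g) P).finrank_eq.symm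

/-- Singular value decomposition in terms of orthonormal bases. -/
structure IsSVD {d : ℕ} (g : GL (Fin d) ℝ) (u v : OrthonormalBasis (Fin d) ℝ (Euc d))
    (σ : Fin d → ℝ) : Prop where
  anti : Antitone σ
  pos : ∀ i, 0 < σ i
  map : ∀ i, Aop g (v i) = σ i • u i

lemma exists_svd {d : ℕ} (hd : 0 < d) (g : GL (Fin d) ℝ) : ∃ u v σ, IsSVD g u v σ := by
  set T : Euc d →ₗ[ℝ] Euc d := (Aop g : Euc d →ₗ[ℝ] Euc d) with hT
  have hS := (LinearMap.isPositive_adjoint_comp_self T).isSymmetric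
  have hn : Module.finrank ℝ (Euc d) = d := by simp
  set v := hS.eigenvectorBasis hn with hv
  set lam := hS.eigenvalues hn with hlam
  have happ : ∀ i, (LinearMap.adjoint T) (T (v i)) = lam i • v i := fun i => by
    exact hS.apply_eigenvectorBasis hn i
  have hin : ∀ i j, ⟪T (v i), T (v j)⟫ = lam j * ⟪v i, v j⟫ := fun i j => by
    rw [← LinearMap.adjoint_inner_right, happ, inner_smul_right]
  have hpos : ∀ i, 0 < lam i := fun i => by
    have h1 := hin i i
    rw [real_inner_self_eq_norm_sq, real_inner_self_eq_norm_sq, v.orthonormal.1 i] at h1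
    have h2 : T (v i) ≠ 0 := Aop_ne g (v.orthonormal.ne_zero i)
    have h3 : 0 < ‖T (v i)‖ := norm_pos_iff.2 h2
    nlinarith [sq_nonneg ‖T (v i)‖, pow_pos h3 2]
  have hss : ∀ i, 0 < Real.sqrt (lam i) := fun i => Real.sqrt_pos.2 (hpos i)
  set u0 : Fin d → Euc d := fun i => (Real.sqrt (lam i))⁻¹ • T (v i) with hu0
  have ho : Orthonormal ℝ u0 := by
    rw [orthonormal_iff_ite]
    intro i j
    simp only [hu0, inner_smul_left, inner_smul_right, hin]
    rw [orthonormal_iff_ite.1 v.orthonormal i j]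
    split_ifs with h
    · subst h
      have := Real.mul_self_sqrt (hpos i).le
      have h2 := (hss i).ne'
      simp only [map_inv₀, conj_trivial, mul_one]
      field_simp
      nlinarith
    · simp
  have : Nonempty (Fin d) := ⟨⟨0, hd⟩⟩
  let b := basisOfOrthonormalOfCardEqFinrank ho (by simp)
  have hb : ⇑b = u0 := by simp [b]
  have hob : Orthonormal ℝ b := by rw [hb]; exact ho
  refine ⟨b.toOrthonormalBasis hob, v, fun i => Real.sqrt (lam i), ?_, hss, ?_⟩
  · intro i j hij
    exact Real.sqrt_le_sqrt (hS.eigenvalues_antitone hn hij)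
  · intro i
    rw [Module.Basis.coe_toOrthonormalBasis, hb]
    simp only [hu0]
    rw [smul_smul, mul_inv_cancel₀ (hss i).ne', one_smul]
    rfl

lemma IsSVD.inner_u {d : ℕ} {g : GL (Fin d) ℝ} {u v : OrthonormalBasis (Fin d) ℝ (Euc d)}
    {σ : Fin d → ℝ} (h : IsSVD g u v σ) (x : Euc d) (i : Fin d) :
    ⟪u i, Aop g x⟫ = σ i * ⟪v i, x⟫ := by
  conv_lhs => rw [← v.sum_repr' x]
  simp only [map_sum, map_smul, h.map, inner_sum, inner_smul_right,
    orthonormal_iff_ite.1 u.orthonormal]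
  simp [mul_comm]

lemma norm_le_of_coord {d : ℕ} (b b' : OrthonormalBasis (Fin d) ℝ (Euc d)) (x y : Euc d) (r : ℝ)
    (hr : 0 ≤ r) (h : ∀ i, |⟪b i, x⟫| ≤ r * |⟪b' i, y⟫|) : ‖x‖ ≤ r * ‖y‖ := by
  have h1 := b.sum_sq_norm_inner_right x
  have h2 := b'.sum_sq_norm_inner_right y
  refine le_of_sq_le_sq ?_ (by positivity)
  rw [mul_pow, ← h1, ← h2, Finset.mul_sum]
  refine Finset.sum_le_sum fun i _ => ?_
  rw [← mul_pow]
  exact pow_le_pow_left₀ (norm_nonneg _) (h i) 2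

/-- Span of the basis vectors with index in `I`. -/
def cs {d : ℕ} (b : OrthonormalBasis (Fin d) ℝ (Euc d)) (I : Finset (Fin d)) :
    Submodule ℝ (Euc d) := Submodule.span ℝ (Set.range fun i : I => b i)

lemma mem_cs {d : ℕ} (b : OrthonormalBasis (Fin d) ℝ (Euc d)) (I : Finset (Fin d)) (x : Euc d) :
    x ∈ cs b I ↔ ∀ i, i ∉ I → ⟪b i, x⟫ = 0 := by
  constructor
  · intro hx i hi
    induction hx using Submodule.span_induction with
    | mem y hy =>
      obtain ⟨j, rfl⟩ := hy
      rw [orthonormal_iff_ite.1 b.orthonormal, if_neg]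
      rintro rfl
      exact hi j.2
    | zero => simp
    | add y z _ _ h1 h2 => rw [inner_add_right, h1, h2, add_zero]
    | smul a y _ h1 => rw [inner_smul_right, h1, mul_zero]
  · intro h
    rw [← b.sum_repr' x]
    refine Submodule.sum_mem _ fun i _ => ?_
    by_cases hi : i ∈ I
    · exact Submodule.smul_mem _ _ (Submodule.subset_span ⟨⟨i, hi⟩, rfl⟩)
    · rw [h i hi, zero_smul]; exact Submodule.zero_mem _

lemma finrank_cs {d : ℕ} (b : OrthonormalBasis (Fin d) ℝ (Euc d)) (I : Finset (Fin d)) :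
    Module.finrank ℝ (cs b I) = I.card := by
  unfold cs
  rw [finrank_span_eq_card]
  · simp
  · exact b.orthonormal.linearIndependent.comp _ Subtype.val_injective

/-- indices below `q` -/
def lo (d q : ℕ) : Finset (Fin d) := Finset.univ.filter fun i => i.val < q
/-- indices at least `q` -/
def hi (d q : ℕ) : Finset (Fin d) := Finset.univ.filter fun i => q ≤ i.val

lemma mem_lo {d q : ℕ} {i : Fin d} : i ∈ lo d q ↔ i.val < q := by simp [lo]
lemma mem_hi {d q : ℕ} {i : Fin d} : i ∈ hi d q ↔ q ≤ i.val := by simp [hi]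

lemma card_lo {d q : ℕ} (h : q ≤ d) : (lo d q).card = q := by
  rw [lo, Fin.card_filter_val_lt]; omega

lemma card_hi {d q : ℕ} : (hi d q).card = d - q := by
  have h : hi d q = (lo d q)ᶜ := by ext i; simp [lo, hi]
  rw [h, Finset.card_compl, Fintype.card_fin, lo, Fin.card_filter_val_lt]; omega

lemma exists_mem_inf {d : ℕ} (P Q : Submodule ℝ (Euc d))
    (h : d < Module.finrank ℝ P + Module.finrank ℝ Q) : ∃ v ∈ P, v ∈ Q ∧ v ≠ 0 := by
  by_contra hc
  push Not at hc
  have : Disjoint P Q := Submodule.disjoint_def.2 hc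
  have := Submodule.finrank_add_finrank_le_of_disjoint this
  simp at this
  omega

namespace IsSVD
variable {d : ℕ} {g : GL (Fin d) ℝ} {u v : OrthonormalBasis (Fin d) ℝ (Euc d)} {σ : Fin d → ℝ}

lemma le_of_hi (h : IsSVD g u v σ) (j : Fin d) {x : Euc d} (hx : x ∈ cs v (hi d j)) :
    ‖Aop g x‖ ≤ σ j * ‖x‖ := by
  refine norm_le_of_coord u v _ _ _ (h.pos j).le fun i => ?_
  rw [h.inner_u, abs_mul, abs_of_pos (h.pos i)]
  by_cases hi : i ∈ hi d j
  · exact mul_le_mul_of_nonneg_right (h.anti (mem_hi.1 hi)) (abs_nonneg _)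
  · rw [(mem_cs _ _ _).1 hx i hi]; simp

lemma ge_of_lo (h : IsSVD g u v σ) (j : Fin d) {x : Euc d} (hx : x ∈ cs v (lo d (j+1))) :
    σ j * ‖x‖ ≤ ‖Aop g x‖ := by
  have hp := h.pos j
  have : ‖x‖ ≤ (σ j)⁻¹ * ‖Aop g x‖ := by
    refine norm_le_of_coord v u _ _ _ (inv_pos.2 hp).le fun i => ?_
    rw [h.inner_u, abs_mul, abs_of_pos (h.pos i)]
    by_cases hi : i ∈ lo d (j+1)
    · have : σ j ≤ σ i := h.anti (Nat.lt_succ_iff.1 (mem_lo.1 hi))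
      rw [← mul_assoc]
      refine le_mul_of_one_le_left (abs_nonneg _) ?_
      rw [inv_mul_eq_div, one_le_div hp]; exact this
    · rw [(mem_cs _ _ _).1 hx i hi]; simp
  rwa [inv_mul_eq_div, le_div_iff₀ hp, mul_comm] at this

lemma inv_inner (h : IsSVD g u v σ) (y : Euc d) (i : Fin d) :
    ⟪v i, Aop g⁻¹ y⟫ = (σ i)⁻¹ * ⟪u i, y⟫ := by
  have := h.inner_u (Aop g⁻¹ y) i
  rw [Aop_inv'] at this
  rw [this, ← mul_assoc, inv_mul_cancel₀ (h.pos i).ne', one_mul]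

/-- On the span of the first left singular vectors, the inverse contracts. -/
lemma inv_le_of_lo (h : IsSVD g u v σ) (j : Fin d) {x : Euc d} (hx : x ∈ cs u (lo d (j+1))) :
    ‖Aop g⁻¹ x‖ ≤ (σ j)⁻¹ * ‖x‖ := by
  refine norm_le_of_coord v u _ _ _ (inv_pos.2 (h.pos j)).le fun i => ?_
  rw [h.inv_inner, abs_mul, abs_of_pos (inv_pos.2 (h.pos i))]
  by_cases hi : i ∈ lo d (j+1)
  · exact mul_le_mul_of_nonneg_right (inv_anti₀ (h.pos j)
      (h.anti (Nat.lt_succ_iff.1 (mem_lo.1 hi)))) (abs_nonneg _)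
  · rw [(mem_cs _ _ _).1 hx i hi]; simp

lemma inv_ge_of_hi (h : IsSVD g u v σ) (j : Fin d) {x : Euc d} (hx : x ∈ cs u (hi d j)) :
    (σ j)⁻¹ * ‖x‖ ≤ ‖Aop g⁻¹ x‖ := by
  have hp := h.pos j
  have : ‖x‖ ≤ σ j * ‖Aop g⁻¹ x‖ := by
    refine norm_le_of_coord u v _ _ _ hp.le fun i => ?_
    rw [h.inv_inner, abs_mul, abs_of_pos (inv_pos.2 (h.pos i))]
    by_cases hi : i ∈ hi d j
    · have : σ i ≤ σ j := h.anti (mem_hi.1 hi)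
      rw [← mul_assoc]
      refine le_mul_of_one_le_left (abs_nonneg _) ?_
      rw [← div_eq_mul_inv, one_le_div (h.pos i)]; exact this
    · rw [(mem_cs _ _ _).1 hx i hi]; simp
  rwa [inv_mul_le_iff₀ hp]

/-- subtracting the part along the high indices -/
lemma exists_hi (h : IsSVD g u v σ) (j : Fin d) (x : Euc d) :
    ∃ z ∈ cs v (hi d (j+1)), σ j * ‖x - z‖ ≤ ‖Aop g x‖ := by
  refine ⟨∑ i ∈ hi d (j+1), ⟪v i, x⟫ • v i, Submodule.sum_mem _ fun i hi =>
    Submodule.smul_mem _ _ (Submodule.subset_span ⟨⟨i, hi⟩, rfl⟩), ?_⟩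
  have hp := h.pos j
  have : ‖x - ∑ i ∈ hi d (j+1), ⟪v i, x⟫ • v i‖ ≤ (σ j)⁻¹ * ‖Aop g x‖ := by
    refine norm_le_of_coord v u _ _ _ (inv_pos.2 hp).le fun i => ?_
    rw [h.inner_u, abs_mul, abs_of_pos (h.pos i), inner_sub_right, inner_sum]
    simp only [inner_smul_right, orthonormal_iff_ite.1 v.orthonormal]
    by_cases hi : i ∈ hi d (j+1)
    · simp [hi]; have := h.pos i; positivity
    · simp only [mul_ite, mul_one, mul_zero, Finset.sum_ite_eq, hi, if_false, sub_zero]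
      have : σ j ≤ σ i := h.anti (by rw [mem_hi] at hi; exact Fin.le_def.2 (by omega))
      rw [← mul_assoc]
      refine le_mul_of_one_le_left (abs_nonneg _) ?_
      rw [inv_mul_eq_div, one_le_div hp]; exact this
  rwa [inv_mul_eq_div, le_div_iff₀ hp, mul_comm] at this

/-- the same for the inverse -/
lemma exists_lo (h : IsSVD g u v σ) (j : Fin d) (x : Euc d) :
    ∃ z ∈ cs u (lo d j), (σ j)⁻¹ * ‖x - z‖ ≤ ‖Aop g⁻¹ x‖ := by
  refine ⟨∑ i ∈ lo d j, ⟪u i, x⟫ • u i, Submodule.sum_mem _ fun i hi =>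
    Submodule.smul_mem _ _ (Submodule.subset_span ⟨⟨i, hi⟩, rfl⟩), ?_⟩
  have hp := h.pos j
  have : ‖x - ∑ i ∈ lo d j, ⟪u i, x⟫ • u i‖ ≤ σ j * ‖Aop g⁻¹ x‖ := by
    refine norm_le_of_coord u v _ _ _ hp.le fun i => ?_
    rw [h.inv_inner, abs_mul, abs_of_pos (inv_pos.2 (h.pos i)), inner_sub_right, inner_sum]
    simp only [inner_smul_right, orthonormal_iff_ite.1 u.orthonormal]
    by_cases hi : i ∈ lo d j
    · simp [hi]; have := h.pos i; positivity
    · simp only [mul_ite, mul_one, mul_zero, Finset.sum_ite_eq, hi, if_false, sub_zero]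
      have : σ i ≤ σ j := h.anti (by rw [mem_lo] at hi; exact Fin.le_def.2 (by omega))
      rw [← mul_assoc]
      refine le_mul_of_one_le_left (abs_nonneg _) ?_
      rw [← div_eq_mul_inv, one_le_div (h.pos i)]; exact this
  rwa [inv_mul_le_iff₀ hp]

end IsSVD

lemma exists_unit {d : ℕ} (P : Submodule ℝ (Euc d)) (h : 1 ≤ Module.finrank ℝ P) :
    ∃ v ∈ P, v ≠ 0 := by
  have : P ≠ ⊥ := by
    rintro rfl
    simp at h
  exact Submodule.exists_mem_ne_zero_of_ne_bot this

lemma sv_ge {d : ℕ} (g : GL (Fin d) ℝ) (P : Submodule ℝ (Euc d)) (q : ℕ) (hq : 1 ≤ q)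
    (hP : Module.finrank ℝ P = q) (r : ℝ) (h : ∀ v ∈ P, r * ‖v‖ ≤ ‖Aop g v‖) :
    r ≤ sv (mat g) q := by
  have hne : ∀ P : Submodule ℝ (Euc d), Module.finrank ℝ P = q →
      ∃ v ∈ P, ‖v‖ = 1 := fun P hP => by
    obtain ⟨v, hv, hv0⟩ := exists_unit P (by omega)
    exact ⟨‖v‖⁻¹ • v, P.smul_mem _ hv, by
      rw [norm_smul, norm_inv, norm_norm, inv_mul_cancel₀ (norm_ne_zero_iff.2 hv0)]⟩
  unfold sv
  refine le_csSup_of_le ?_ ⟨P, hP, rfl⟩ ?_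
  · refine ⟨‖Aop g‖, ?_⟩
    rintro r ⟨Q, hQ, rfl⟩
    obtain ⟨v, hv, hv1⟩ := hne Q hQ
    refine le_trans (csInf_le ⟨0, ?_⟩ ⟨v, hv, hv1, rfl⟩) ?_
    · rintro t ⟨w, -, -, rfl⟩; exact norm_nonneg _
    · rw [act_eq]
      simpa [hv1] using (Aop g).le_opNorm v
  · obtain ⟨v, hv, hv1⟩ := hne P hP
    refine le_csInf ⟨_, v, hv, hv1, rfl⟩ ?_
    rintro t ⟨w, hw, hw1, rfl⟩
    rw [act_eq]
    simpa [hw1] using h w hw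

lemma sv_le {d : ℕ} (g : GL (Fin d) ℝ) (q : ℕ) (hqd : q ≤ d) (r : ℝ)
    (h : ∀ P : Submodule ℝ (Euc d), Module.finrank ℝ P = q → ∃ v ∈ P, v ≠ 0 ∧
      ‖Aop g v‖ ≤ r * ‖v‖) :
    sv (mat g) q ≤ r := by
  unfold sv
  refine csSup_le ?_ ?_
  · refine ⟨_, cs (EuclideanSpace.basisFun (Fin d) ℝ) (lo d q), ?_, rfl⟩
    rw [finrank_cs, card_lo hqd]
  · rintro _ ⟨P, hP, rfl⟩
    obtain ⟨v, hv, hv0, hle⟩ := h P hP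
    have hv1 := norm_pos_iff.2 hv0
    refine le_trans (csInf_le ⟨0, ?_⟩ ⟨‖v‖⁻¹ • v, P.smul_mem _ hv, ?_, rfl⟩) ?_
    · rintro t ⟨w, -, -, rfl⟩; exact norm_nonneg _
    · rw [norm_smul, norm_inv, norm_norm, inv_mul_cancel₀ hv1.ne']
    · rw [act_eq, map_smul, norm_smul, norm_inv, norm_norm, inv_mul_le_iff₀ hv1, mul_comm]
      exact hle

lemma IsSVD.sv_eq {d : ℕ} {g : GL (Fin d) ℝ} {u v : OrthonormalBasis (Fin d) ℝ (Euc d)}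
    {σ : Fin d → ℝ} (h : IsSVD g u v σ) (j : Fin d) : sv (mat g) (j + 1) = σ j := by
  apply le_antisymm
  · refine sv_le g _ j.2 _ fun P hP => ?_
    obtain ⟨x, hx, hx', hx0⟩ := exists_mem_inf P (cs v (hi d j)) (by
      rw [hP, finrank_cs, card_hi]; omega)
    exact ⟨x, hx, hx0, h.le_of_hi j hx'⟩
  · exact sv_ge g (cs v (lo d (j+1))) _ (by omega) (by rw [finrank_cs, card_lo j.2]) _
      fun x hx => h.ge_of_lo j hx

lemma sv_pos {d : ℕ} (g : GL (Fin d) ℝ) (q : ℕ) (hq : 1 ≤ q) (hqd : q ≤ d) : 0 < sv (mat g) q := by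
  obtain ⟨u, v, σ, h⟩ := exists_svd (by omega) g
  obtain ⟨k, rfl⟩ : ∃ k, q = k + 1 := ⟨q - 1, by omega⟩
  rw [h.sv_eq ⟨k, by omega⟩]
  exact h.pos _

lemma sv_exists_le {d : ℕ} (g : GL (Fin d) ℝ) (q : ℕ) (hq : 1 ≤ q) (hqd : q ≤ d)
    (P : Submodule ℝ (Euc d)) (hP : Module.finrank ℝ P = q) :
    ∃ x ∈ P, x ≠ 0 ∧ ‖Aop g x‖ ≤ sv (mat g) q * ‖x‖ := by
  obtain ⟨u, v, σ, h⟩ := exists_svd (by omega) g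
  obtain ⟨k, rfl⟩ : ∃ k, q = k + 1 := ⟨q - 1, by omega⟩
  have := h.sv_eq ⟨k, by omega⟩
  obtain ⟨x, hx, hx', hx0⟩ := exists_mem_inf P (cs v (hi d k)) (by
      rw [hP, finrank_cs, card_hi]; omega)
  refine ⟨x, hx, hx0, ?_⟩
  rw [this]
  exact h.le_of_hi _ hx'

lemma sv_exists_ge {d : ℕ} (g : GL (Fin d) ℝ) (q : ℕ) (hq : 1 ≤ q) (hqd : q ≤ d) :
    ∃ P : Submodule ℝ (Euc d), Module.finrank ℝ P = q ∧
      ∀ x ∈ P, sv (mat g) q * ‖x‖ ≤ ‖Aop g x‖ := by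
  obtain ⟨u, v, σ, h⟩ := exists_svd (by omega) g
  obtain ⟨k, rfl⟩ : ∃ k, q = k + 1 := ⟨q - 1, by omega⟩
  have := h.sv_eq ⟨k, by omega⟩
  refine ⟨cs v (lo d (k+1)), by rw [finrank_cs, card_lo hqd], fun x hx => ?_⟩
  rw [this]
  exact h.ge_of_lo ⟨k, by omega⟩ hx

lemma sv_mul_left {d : ℕ} (h g : GL (Fin d) ℝ) (q : ℕ) (hq : 1 ≤ q) (hqd : q ≤ d) (K : ℝ)
    (hK : ∀ v, ‖Aop h v‖ ≤ K * ‖v‖) (hK0 : 0 ≤ K) :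
    sv (mat (h * g)) q ≤ K * sv (mat g) q := by
  obtain ⟨P, hP, hP2⟩ := sv_exists_ge (h * g) q hq hqd
  obtain ⟨x, hx, hx0, hx1⟩ := sv_exists_le g q hq hqd P hP
  have h1 := hP2 x hx
  rw [Aop_mul] at h1
  have h2 := hK (Aop g x)
  have h3 := mul_le_mul_of_nonneg_left hx1 hK0
  refine le_of_mul_le_mul_right ?_ (norm_pos_iff.2 hx0)
  linarith

lemma sv_mul_right {d : ℕ} (h g : GL (Fin d) ℝ) (q : ℕ) (hq : 1 ≤ q) (hqd : q ≤ d) (K : ℝ)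
    (hK : ∀ v, ‖Aop g v‖ ≤ K * ‖v‖) :
    sv (mat (h * g)) q ≤ K * sv (mat h) q := by
  obtain ⟨P, hP, hP2⟩ := sv_exists_ge (h * g) q hq hqd
  obtain ⟨y, hy, hy0, hy1⟩ := sv_exists_le h q hq hqd (mapMat (mat g) P)
    (by rw [finrank_mapMat, hP])
  obtain ⟨x, hx, rfl⟩ := (mem_mapMat _ _ _).1 hy
  have hx0 : x ≠ 0 := by rintro rfl; simp at hy0
  have h1 := hP2 x hx
  rw [Aop_mul] at h1
  have h3 := mul_le_mul_of_nonneg_left (hK x) (sv_pos h q hq hqd).le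
  refine le_of_mul_le_mul_right ?_ (norm_pos_iff.2 hx0)
  linarith


lemma det_mul_expand {ι κ : Type*} [Fintype ι] [DecidableEq ι] [Fintype κ] [DecidableEq κ]
    (R : Matrix ι κ ℝ) (B : Matrix κ ι ℝ) :
    (R * B).det = ∑ f : ι → κ, (∏ i, R i (f i)) * (B.submatrix f id).det := by
  have h1 : (R * B).det = Matrix.detRowAlternating.toMultilinearMap
      (fun i => ∑ k, R i k • B k) := by
    change Matrix.detRowAlternating (R * B) = Matrix.detRowAlternating _
    congr 1
    funext i j
    simp [Matrix.mul_apply]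
  rw [h1, MultilinearMap.map_sum]
  refine Finset.sum_congr rfl fun f _ => ?_
  rw [MultilinearMap.map_smul_univ]
  rfl

lemma abs_det_mul_mul_le {ι κ : Type*} [Fintype ι] [DecidableEq ι] [Fintype κ] [DecidableEq κ]
    (R : Matrix ι κ ℝ) (N : Matrix κ κ ℝ) (Q : Matrix κ ι ℝ) (hR : ∀ i k, |R i k| ≤ 1)
    (hQ : ∀ k i, |Q k i| ≤ 1) (B : ℝ) (hB : ∀ f f' : ι → κ, |(N.submatrix f f').det| ≤ B) :
    |(R * N * Q).det| ≤ (Fintype.card (ι → κ)) * ((Fintype.card (ι → κ)) * B) := by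
  have key : ∀ (R : Matrix ι κ ℝ) (M : Matrix κ ι ℝ) (C : ℝ), (∀ i k, |R i k| ≤ 1) →
      (∀ f : ι → κ, |(M.submatrix f id).det| ≤ C) →
      |(R * M).det| ≤ (Fintype.card (ι → κ)) * C := by
    intro R M C hR hM
    rw [det_mul_expand]
    refine (Finset.abs_sum_le_sum_abs _ _).trans ?_
    have : ∀ f ∈ (Finset.univ : Finset (ι → κ)),
        |(∏ i, R i (f i)) * (M.submatrix f id).det| ≤ C := by
      intro f _
      rw [abs_mul, Finset.abs_prod]
      have h1 : ∏ i, |R i (f i)| ≤ 1 := Finset.prod_le_one (fun _ _ => abs_nonneg _)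
        (fun i _ => hR i _)
      calc _ ≤ 1 * |(M.submatrix f id).det| := mul_le_mul_of_nonneg_right h1 (abs_nonneg _)
        _ ≤ C := by rw [one_mul]; exact hM f
    refine (Finset.sum_le_card_nsmul _ _ _ this).trans ?_
    simp
  rw [Matrix.mul_assoc]
  refine key R (N * Q) _ hR fun f => ?_
  have h2 : ((N * Q).submatrix f id).det = (Qᵀ * (N.submatrix f id)ᵀ).det := by
    rw [← Matrix.transpose_mul, Matrix.det_transpose]
    congr 1
  rw [h2]
  refine key _ _ _ (fun i k => hQ k i) fun f' => ?_
  have h3 : ((N.submatrix f id)ᵀ.submatrix f' id).det = (N.submatrix f f').det := by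
    rw [← Matrix.det_transpose]
    congr 1
  rw [h3]
  exact hB f f'

lemma prod_le_gap {d p : ℕ} (hp1 : 1 ≤ p) (hpd : p < d) (σ : Fin d → ℝ) (ha : Antitone σ)
    (hpos : ∀ i, 0 < σ i) (I : Finset (Fin d)) (hI : I.card = (lo d p).card) :
    ∏ i ∈ I, σ i ≤ (σ ⟨p, hpd⟩ / σ ⟨p - 1, by omega⟩) ^ (I \ lo d p).card * ∏ i ∈ lo d p, σ i := by
  set J := lo d p
  have hc : (I \ J).card = (J \ I).card := Finset.card_sdiff_comm hI
  have e1 : (∏ i ∈ I \ J, σ i) * ∏ i ∈ I ∩ J, σ i = ∏ i ∈ I, σ i := by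
    rw [← Finset.prod_union (Finset.disjoint_sdiff_inter I J), Finset.sdiff_union_inter]
  have e2 : (∏ i ∈ J \ I, σ i) * ∏ i ∈ I ∩ J, σ i = ∏ i ∈ J, σ i := by
    rw [Finset.inter_comm, ← Finset.prod_union (Finset.disjoint_sdiff_inter J I),
      Finset.sdiff_union_inter]
  set b := σ ⟨p, hpd⟩
  set a := σ ⟨p - 1, by omega⟩
  have ha0 : 0 < a := hpos _
  have f1 : ∏ i ∈ I \ J, σ i ≤ b ^ (I \ J).card := by
    rw [← Finset.prod_const]
    refine Finset.prod_le_prod (fun i _ => (hpos i).le) fun i hi => ?_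
    · rw [Finset.mem_sdiff, mem_lo] at hi
      exact ha (Fin.le_def.2 (by simpa using hi.2))
  have f2 : a ^ (J \ I).card ≤ ∏ i ∈ J \ I, σ i := by
    rw [← Finset.prod_const]
    refine Finset.prod_le_prod (fun _ _ => ha0.le) fun i hi => ?_
    rw [Finset.mem_sdiff, mem_lo] at hi
    exact ha (Fin.le_def.2 (by have := hi.1; simp only; omega))
  rw [← e1, ← e2, div_pow, ← mul_assoc]
  refine mul_le_mul_of_nonneg_right ?_ (Finset.prod_nonneg fun i _ => (hpos i).le)
  rw [div_mul_eq_mul_div, le_div_iff₀ (pow_pos ha0 _)]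
  refine mul_le_mul f1 (hc ▸ f2) (pow_pos ha0 _).le ?_
  exact pow_nonneg (hpos _).le _

lemma prod_comp_le {d p : ℕ} (hp1 : 1 ≤ p) (hpd : p < d) (σ : Fin d → ℝ) (ha : Antitone σ)
    (hpos : ∀ i, 0 < σ i) (f : lo d p → Fin d) (hf : Function.Injective f) :
    ∏ i, σ (f i) ≤ ∏ i ∈ lo d p, σ i ∧ ((∃ i, f i ∉ lo d p) →
      ∏ i, σ (f i) ≤ (σ ⟨p, hpd⟩ / σ ⟨p - 1, by omega⟩) * ∏ i ∈ lo d p, σ i) := by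
  have hI : (Finset.univ.image f).card = (lo d p).card := by
    rw [Finset.card_image_of_injective _ hf]; simp
  have h := prod_le_gap hp1 hpd σ ha hpos _ hI
  rw [Finset.prod_image (fun _ _ _ _ h => hf h)] at h
  have hD : 0 ≤ ∏ i ∈ lo d p, σ i := Finset.prod_nonneg fun i _ => (hpos i).le
  set G := σ ⟨p, hpd⟩ / σ ⟨p - 1, by omega⟩ with hG
  have hG0 : 0 ≤ G := div_nonneg (hpos _).le (hpos _).le
  have hG1 : G ≤ 1 := by
    rw [hG, div_le_one (hpos _)]
    exact ha (Fin.le_def.2 (by simp))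
  refine ⟨h.trans (mul_le_of_le_one_left hD (pow_le_one₀ hG0 hG1)), ?_⟩
  rintro ⟨i, hi⟩
  refine h.trans (mul_le_mul_of_nonneg_right ?_ hD)
  refine pow_le_of_le_one hG0 hG1 ?_
  rw [Finset.card_ne_zero]
  exact ⟨f i, Finset.mem_sdiff.2 ⟨Finset.mem_image_of_mem _ (Finset.mem_univ _), hi⟩⟩

lemma abs_det_le_fact {ι : Type*} [Fintype ι] [DecidableEq ι] (M : Matrix ι ι ℝ)
    (h : ∀ i j, |M i j| ≤ 1) : |M.det| ≤ (Fintype.card ι).factorial := by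
  have := Matrix.det_le (A := M) (abv := AbsoluteValue.abs) (x := 1) h
  simpa using this

lemma abs_inner_basis_le {d : ℕ} (b b' : OrthonormalBasis (Fin d) ℝ (Euc d)) (i j : Fin d) :
    |⟪b i, b' j⟫| ≤ 1 := by
  have := abs_real_inner_le_norm (b i) (b' j)
  rwa [b.orthonormal.1, b'.orthonormal.1, one_mul] at this

/-- Determinant bound by an almost kernel vector. -/
lemma abs_det_mul_le {ι : Type*} [Fintype ι] [DecidableEq ι] (M : Matrix ι ι ℝ)
    (h : ∀ i j, |M i j| ≤ 1) (c : ι → ℝ) (η : ℝ) (hc : ∀ i, |(M *ᵥ c) i| ≤ η) (j : ι) :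
    |M.det| * |c j| ≤ Fintype.card ι * ((Fintype.card ι).factorial * η) := by
  have h1 : M.adjugate *ᵥ (M *ᵥ c) = M.det • c := by
    rw [Matrix.mulVec_mulVec, Matrix.adjugate_mul, Matrix.smul_mulVec, Matrix.one_mulVec]
  have h2 : M.det * c j = ∑ i, M.adjugate j i * (M *ᵥ c) i := by
    have := congrFun h1 j
    rw [Pi.smul_apply, smul_eq_mul] at this
    rw [← this]; rfl
  rw [← abs_mul, h2]
  refine (Finset.abs_sum_le_sum_abs _ _).trans ?_
  refine (Finset.sum_le_card_nsmul _ _ ((Fintype.card ι).factorial * η) ?_).trans ?_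
  · intro i _
    rw [abs_mul]
    refine mul_le_mul ?_ (hc i) (abs_nonneg _) (by positivity)
    rw [Matrix.adjugate_apply]
    refine abs_det_le_fact _ fun a b => ?_
    rw [Matrix.updateRow_apply]
    split_ifs
    · rw [Pi.single_apply]; split_ifs <;> simp
    · exact h a b
  · simp

/-- The key volume estimate. -/
lemma vol_mul_le {d p : ℕ} (hp1 : 1 ≤ p) (hpd : p < d) : ∃ C : ℝ, 1 ≤ C ∧
    ∀ (g h : GL (Fin d) ℝ) (u1 v1 u2 v2 u3 v3 : OrthonormalBasis (Fin d) ℝ (Euc d))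
      (σ1 σ2 σ3 : Fin d → ℝ), IsSVD h u1 v1 σ1 → IsSVD g u2 v2 σ2 → IsSVD (h * g) u3 v3 σ3 →
      ∀ (z z' : Euc d) (δ : ℝ), z ∈ cs u2 (lo d p) → z' ∈ cs v1 (hi d p) → z ≠ 0 →
        ‖z - z'‖ ≤ δ * ‖z‖ →
      ∏ i ∈ lo d p, σ3 i ≤ C * (σ1 ⟨p, hpd⟩ / σ1 ⟨p - 1, by omega⟩ +
        σ2 ⟨p, hpd⟩ / σ2 ⟨p - 1, by omega⟩ + δ) *
        ((∏ i ∈ lo d p, σ1 i) * ∏ i ∈ lo d p, σ2 i) := by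
  set n := Fintype.card (lo d p) with hn
  set m := Fintype.card (lo d p → Fin d) with hm
  have hn1 : 1 ≤ n := by rw [hn, Fintype.card_coe, card_lo hpd.le]; exact hp1
  have hm1 : 1 ≤ m := by
    rw [hm]
    have : Nonempty (lo d p → Fin d) := ⟨Subtype.val⟩
    exact Fintype.card_pos
  have hn1' : (1:ℝ) ≤ n := by exact_mod_cast hn1
  have hm1' : (1:ℝ) ≤ m := by exact_mod_cast hm1
  have hf1 : (1:ℝ) ≤ n.factorial := by exact_mod_cast Nat.factorial_pos n
  refine ⟨m * (m * (n * (n * n.factorial))), ?_, ?_⟩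
  · have := one_le_mul_of_one_le_of_one_le hn1' (one_le_mul_of_one_le_of_one_le hn1' hf1)
    exact one_le_mul_of_one_le_of_one_le hm1' (one_le_mul_of_one_le_of_one_le hm1' this)
  intro g h u1 v1 u2 v2 u3 v3 σ1 σ2 σ3 s1 s2 s3 z z' δ hz hz' hz0 hzz
  have hzpos := norm_pos_iff.2 hz0
  have hδ : 0 ≤ δ := by
    by_contra hc
    push Not at hc
    nlinarith [norm_nonneg (z - z')]
  set G1 := σ1 ⟨p, hpd⟩ / σ1 ⟨p - 1, by omega⟩
  set G2 := σ2 ⟨p, hpd⟩ / σ2 ⟨p - 1, by omega⟩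
  have hG1 : 0 ≤ G1 := div_nonneg (s1.pos _).le (s1.pos _).le
  have hG2 : 0 ≤ G2 := div_nonneg (s2.pos _).le (s2.pos _).le
  set D1 := ∏ i ∈ lo d p, σ1 i
  set D2 := ∏ i ∈ lo d p, σ2 i
  have hD1 : 0 ≤ D1 := Finset.prod_nonneg fun i _ => (s1.pos i).le
  have hD2 : 0 ≤ D2 := Finset.prod_nonneg fun i _ => (s2.pos i).le
  -- the matrices
  let R : Matrix (lo d p) (Fin d) ℝ := Matrix.of fun i a => ⟪u3 i, u1 a⟫
  let M : Matrix (Fin d) (Fin d) ℝ := Matrix.of fun a b => ⟪v1 a, u2 b⟫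
  let N : Matrix (Fin d) (Fin d) ℝ := Matrix.of fun a b => σ1 a * ⟪v1 a, u2 b⟫ * σ2 b
  let Q : Matrix (Fin d) (lo d p) ℝ := Matrix.of fun b j => ⟪v2 b, v3 j⟫
  have hRNQ : R * N * Q = Matrix.diagonal fun i : lo d p => σ3 i := by
    ext i j
    have e1 : ⟪u3 i, Aop (h * g) (v3 j)⟫ = Matrix.diagonal (fun i : lo d p => σ3 i) i j := by
      rw [s3.inner_u, orthonormal_iff_ite.1 v3.orthonormal, Matrix.diagonal_apply]
      simp only [Subtype.ext_iff]
      split_ifs <;> simp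
    rw [← e1, Aop_mul]
    have e2 : ∀ a, ⟪u1 a, Aop h (Aop g (v3 j))⟫ = ∑ b, N a b * Q b j := by
      intro a
      rw [s1.inner_u]
      conv_lhs => rw [← u2.sum_repr' (Aop g (v3 j))]
      rw [inner_sum, Finset.mul_sum]
      refine Finset.sum_congr rfl fun b _ => ?_
      rw [inner_smul_right, s2.inner_u]
      simp only [N, Q, Matrix.of_apply]
      ring
    conv_rhs => rw [← u1.sum_repr' (Aop h (Aop g (v3 j)))]
    rw [inner_sum, Matrix.mul_assoc, Matrix.mul_apply]
    refine Finset.sum_congr rfl fun a _ => ?_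
    rw [inner_smul_right, e2, Matrix.mul_apply, mul_comm]
    rfl
  have hdet : ∏ i ∈ lo d p, σ3 i = |(R * N * Q).det| := by
    rw [hRNQ, Matrix.det_diagonal, Finset.prod_coe_sort (lo d p) σ3, abs_of_nonneg]
    exact Finset.prod_nonneg fun i _ => (s3.pos i).le
  rw [hdet]
  have hfin := abs_det_mul_mul_le R N Q (fun i a => abs_inner_basis_le _ _ _ _)
    (fun b j => abs_inner_basis_le _ _ _ _)
    (n * (n * n.factorial) * (G1 + G2 + δ) * (D1 * D2)) ?_
  · refine hfin.trans (le_of_eq ?_)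
    ring
  intro f f'
  have hNd : (N.submatrix f f').det =
      (∏ i, σ1 (f i)) * (M.submatrix f f').det * ∏ i, σ2 (f' i) := by
    have : N.submatrix f f' = Matrix.diagonal (fun i => σ1 (f i)) * M.submatrix f f' *
        Matrix.diagonal (fun i => σ2 (f' i)) := by
      ext i j
      rw [Matrix.mul_diagonal, Matrix.diagonal_mul]
      rfl
    rw [this, Matrix.det_mul, Matrix.det_mul, Matrix.det_diagonal, Matrix.det_diagonal]
  have hcb : (1:ℝ) * (n.factorial) ≤ n * (n * n.factorial) := by
    rw [← mul_assoc]
    exact mul_le_mul_of_nonneg_right (one_le_mul_of_one_le_of_one_le hn1' hn1') (by positivity)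
  rw [one_mul] at hcb
  have hrhs : 0 ≤ n * (n * n.factorial) * (G1 + G2 + δ) * (D1 * D2) := by positivity
  by_cases hf : Function.Injective f
  swap
  · have : (M.submatrix f f').det = 0 := by
      simp only [Function.Injective] at hf
      push Not at hf
      obtain ⟨a, b, hab, hne⟩ := hf
      refine Matrix.det_zero_of_row_eq hne ?_
      funext j
      simp [Matrix.submatrix_apply, hab]
    rw [hNd, this]; simpa using hrhs
  by_cases hf' : Function.Injective f'
  swap
  · have : (M.submatrix f f').det = 0 := by
      simp only [Function.Injective] at hf'
      push Not at hf'
      obtain ⟨a, b, hab, hne⟩ := hf'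
      refine Matrix.det_zero_of_column_eq hne ?_
      intro j
      simp [Matrix.submatrix_apply, hab]
    rw [hNd, this]; simpa using hrhs
  have p1 := prod_comp_le hp1 hpd σ1 s1.anti s1.pos f hf
  have p2 := prod_comp_le hp1 hpd σ2 s2.anti s2.pos f' hf'
  have q1 : 0 ≤ ∏ i, σ1 (f i) := Finset.prod_nonneg fun i _ => (s1.pos _).le
  have q2 : 0 ≤ ∏ i, σ2 (f' i) := Finset.prod_nonneg fun i _ => (s2.pos _).le
  have hMe : ∀ i j, |(M.submatrix f f') i j| ≤ 1 := fun i j => abs_inner_basis_le _ _ _ _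
  have hMd := abs_det_le_fact _ hMe
  rw [hNd, abs_mul, abs_mul, abs_of_nonneg q1, abs_of_nonneg q2]
  by_cases t1 : ∃ i, f i ∉ lo d p
  · calc _ ≤ (G1 * D1) * n.factorial * D2 :=
        mul_le_mul (mul_le_mul (p1.2 t1) hMd (abs_nonneg _) (by positivity)) p2.1 q2
          (by positivity)
      _ = n.factorial * G1 * (D1 * D2) := by ring
      _ ≤ _ := by
        gcongr
        linarith
  by_cases t2 : ∃ i, f' i ∉ lo d p
  · calc _ ≤ D1 * n.factorial * (G2 * D2) :=
        mul_le_mul (mul_le_mul p1.1 hMd (abs_nonneg _) (by positivity)) (p2.2 t2) q2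
          (by positivity)
      _ = n.factorial * G2 * (D1 * D2) := by ring
      _ ≤ _ := by
        gcongr
        linarith
  push Not at t1 t2
  have hMd2 : |(M.submatrix f f').det| ≤ n * (n * n.factorial) * δ := by
    -- sum representation of z
    have hbij : Function.Bijective (fun i : lo d p => (⟨f' i, t2 i⟩ : lo d p)) := by
      rw [Fintype.bijective_iff_injective_and_card]
      exact ⟨fun a b hab => hf' (Subtype.ext_iff.1 hab), rfl⟩
    have hzs : ∑ j, ⟪u2 (f' j), z⟫ • u2 (f' j) = z := by
      rw [hbij.sum_comp (fun k : lo d p => ⟪u2 k, z⟫ • u2 k),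
        Finset.sum_coe_sort (lo d p) (fun k => ⟪u2 k, z⟫ • u2 k)]
      conv_rhs => rw [← u2.sum_repr' z]
      refine Finset.sum_subset (Finset.subset_univ _) fun i _ hi => ?_
      rw [(mem_cs _ _ _).1 hz i hi, zero_smul]
    have hk : ∀ j, |(M.submatrix f f').det| * |⟪u2 (f' j), z⟫| ≤ n * (n.factorial * (δ * ‖z‖)) := by
      intro j
      refine abs_det_mul_le _ hMe (fun j => ⟪u2 (f' j), z⟫) (δ * ‖z‖) (fun i => ?_) j
      have : ((M.submatrix f f') *ᵥ fun j => ⟪u2 (f' j), z⟫) i = ⟪v1 (f i), z - z'⟫ := by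
        rw [inner_sub_right, (mem_cs _ _ _).1 hz' (f i) (by
          rw [mem_hi]; have := mem_lo.1 (t1 i); omega), sub_zero]
        conv_rhs => rw [← hzs]
        rw [inner_sum]
        simp only [Matrix.mulVec, dotProduct, inner_smul_right]
        refine Finset.sum_congr rfl fun j _ => ?_
        rw [mul_comm]; rfl
      rw [this]
      refine (abs_real_inner_le_norm _ _).trans ?_
      rw [v1.orthonormal.1, one_mul]
      exact hzz
    have hns : ‖z‖ ≤ ∑ j, |⟪u2 (f' j), z⟫| := by
      conv_lhs => rw [← hzs]
      refine (norm_sum_le _ _).trans (le_of_eq ?_)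
      refine Finset.sum_congr rfl fun j _ => ?_
      rw [norm_smul, u2.orthonormal.1, mul_one, Real.norm_eq_abs]
    refine le_of_mul_le_mul_right ?_ hzpos
    calc _ ≤ |(M.submatrix f f').det| * ∑ j, |⟪u2 (f' j), z⟫| :=
          mul_le_mul_of_nonneg_left hns (abs_nonneg _)
      _ ≤ n * (n * (n.factorial * (δ * ‖z‖))) := by
        rw [Finset.mul_sum]
        refine (Finset.sum_le_card_nsmul _ _ _ (fun j _ => hk j)).trans ?_
        simp [hn]
      _ = _ := by ring
  calc _ ≤ D1 * (n * (n * n.factorial) * δ) * D2 :=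
        mul_le_mul (mul_le_mul p1.1 hMd2 (abs_nonneg _) (by positivity)) p2.1 q2
          (by positivity)
    _ = n * (n * n.factorial) * δ * (D1 * D2) := by ring
    _ ≤ _ := by
      gcongr
      linarith


/-- `S` is `δ`-close to a part of `T`. -/
def Near {d : ℕ} (S T : Submodule ℝ (Euc d)) (δ : ℝ) : Prop :=
  ∀ v ∈ S, ∃ w ∈ T, ‖v - w‖ ≤ δ * ‖v‖

lemma norm_sub_proj_le {d : ℕ} (S : Submodule ℝ (Euc d)) (y z : Euc d) (hz : z ∈ S) :
    ‖y - S.starProjection y‖ ≤ ‖y - z‖ := by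
  rw [Submodule.starProjection_minimal]
  refine ciInf_le ⟨0, ?_⟩ (⟨z, hz⟩ : S)
  rintro _ ⟨w, rfl⟩
  exact norm_nonneg _

lemma near_comp {d : ℕ} {S T : Submodule ℝ (Euc d)} {δ : ℝ} (hδ : 0 ≤ δ) (h : Near S T δ) :
    ‖(1 - T.starProjection) * S.starProjection‖ ≤ δ := by
  refine ContinuousLinearMap.opNorm_le_bound _ hδ fun v => ?_
  obtain ⟨w, hw, hvw⟩ := h _ (S.starProjection_apply_mem v)
  have h1 := norm_sub_proj_le T (S.starProjection v) w hw
  have h2 := S.norm_starProjection_apply_le v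
  have h3 := mul_le_mul_of_nonneg_left h2 hδ
  simp only [ContinuousLinearMap.mul_apply, ContinuousLinearMap.sub_apply,
    ContinuousLinearMap.one_apply]
  linarith

lemma near_proj {d : ℕ} {S T : Submodule ℝ (Euc d)} {δ : ℝ} (hδ : 0 ≤ δ) (h : Near S T δ)
    (h' : Near T S δ) : ‖S.starProjection - T.starProjection‖ ≤ 2 * δ := by
  have e1 : star S.starProjection = S.starProjection := isSelfAdjoint_starProjection S
  have e2 : star T.starProjection = T.starProjection := isSelfAdjoint_starProjection T
  have e : S.starProjection - T.starProjection = (1 - T.starProjection) * S.starProjection -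
      star ((1 - S.starProjection) * T.starProjection) := by
    rw [star_mul, star_sub, star_one, e1, e2]
    noncomm_ring
  rw [e]
  refine (norm_sub_le _ _).trans ?_
  have hst : ‖star ((1 - S.starProjection) * T.starProjection)‖ =
      ‖(1 - S.starProjection) * T.starProjection‖ :=
    LinearIsometryEquiv.norm_map ContinuousLinearMap.adjoint _
  rw [hst]
  linarith [near_comp hδ h, near_comp hδ h']

lemma near_finrank {d : ℕ} {S T : Submodule ℝ (Euc d)} {δ : ℝ} (hδ : δ < 1) (h : Near S T δ) :
    Module.finrank ℝ S ≤ Module.finrank ℝ T := by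
  let f : S →ₗ[ℝ] T := (T.orthogonalProjection : Euc d →ₗ[ℝ] T) ∘ₗ S.subtype
  refine LinearMap.finrank_le_finrank_of_injective (f := f) ?_
  rw [← LinearMap.ker_eq_bot, LinearMap.ker_eq_bot']
  intro v hv
  have h0 : T.starProjection (v : Euc d) = 0 := by
    have := congrArg (Subtype.val) hv
    exact this
  obtain ⟨w, hw, hvw⟩ := h v v.2
  have h1 := norm_sub_proj_le T v w hw
  rw [h0, sub_zero] at h1
  have : ‖(v : Euc d)‖ = 0 := by
    by_contra hne
    have hp : 0 < ‖(v : Euc d)‖ := lt_of_le_of_ne (norm_nonneg _) (Ne.symm hne)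
    nlinarith
  exact Subtype.ext (norm_eq_zero.1 this)

/-- Singular gap data. -/
structure GapData {d : ℕ} (g : GL (Fin d) ℝ) (S : Submodule ℝ (Euc d)) (s γ : ℝ) : Prop where
  pos : 0 < s
  le : ∀ v ∈ S, ‖Aop g v‖ ≤ γ * s * ‖v‖
  ge : ∀ v, ∃ z ∈ S, s * ‖v - z‖ ≤ ‖Aop g v‖

lemma GapData.exists_near {d : ℕ} {g : GL (Fin d) ℝ} {S : Submodule ℝ (Euc d)} {s γ : ℝ}
    (h : GapData g S s γ) (v : Euc d) (t : ℝ) (ht : ‖Aop g v‖ ≤ s * t) :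
    ∃ z ∈ S, ‖v - z‖ ≤ t := by
  obtain ⟨z, hz, hle⟩ := h.ge v
  exact ⟨z, hz, le_of_mul_le_mul_left (hle.trans ht) h.pos⟩

section cocycle
variable {X : Type*} [TopologicalSpace X] {d : ℕ} (θ : X ≃ₜ X) (ψ0 : X → GL (Fin d) ℝ)

lemma cocyc_add (m n : ℕ) (x : X) :
    cocyc θ ψ0 (m + n) x = cocyc θ ψ0 m ((θ : X → X)^[n] x) * cocyc θ ψ0 n x := by
  induction m with
  | zero => simp [cocyc]
  | succ m ih =>
    rw [Nat.add_right_comm, cocyc, ih, cocyc, mul_assoc, ← Function.iterate_add_apply]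

lemma cocyc_one (x : X) : cocyc θ ψ0 1 x = ψ0 x := by simp [cocyc]

lemma cocyc_succ' (n : ℕ) (x : X) : cocyc θ ψ0 (n + 1) x = cocyc θ ψ0 n (θ x) * ψ0 x := by
  rw [cocyc_add, cocyc_one]; rfl

lemma iter_symm (n : ℕ) (x : X) : (θ : X → X)^[n] ((θ.symm : X → X)^[n] x) = x :=
  (Function.RightInverse.iterate (fun y => θ.apply_symm_apply y) n) x

lemma symm_iter (n : ℕ) (x : X) : (θ.symm : X → X)^[n] ((θ : X → X)^[n] x) = x :=
  (Function.LeftInverse.iterate (fun y => θ.symm_apply_apply y) n) x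

lemma cocyc_inv (n : ℕ) (x : X) :
    cocyc θ.symm (fun y => (ψ0 (θ.symm y))⁻¹) n x = (cocyc θ ψ0 n ((θ.symm : X → X)^[n] x))⁻¹ := by
  induction n with
  | zero => simp [cocyc]
  | succ n ih =>
    rw [cocyc, ih, cocyc_succ', mul_inv_rev, Function.iterate_succ_apply']
    simp

lemma cocyc_bound {K : ℝ} (hK1 : 1 ≤ K)
    (hK : ∀ x v, ‖Aop (ψ0 x) v‖ ≤ K * ‖v‖)
    (n : ℕ) (x : X) (v : Euc d) : ‖Aop (cocyc θ ψ0 n x) v‖ ≤ K ^ n * ‖v‖ := by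
  induction n with
  | zero => simp [cocyc, Aop_one]
  | succ n ih =>
    rw [cocyc, Aop_mul, pow_succ', mul_assoc]
    exact (hK _ _).trans (mul_le_mul_of_nonneg_left ih (by linarith))

lemma cocyc_bound' {K : ℝ} (hK1 : 1 ≤ K)
    (hK' : ∀ x v, ‖Aop (ψ0 x)⁻¹ v‖ ≤ K * ‖v‖)
    (n : ℕ) (x : X) (v : Euc d) : ‖v‖ ≤ K ^ n * ‖Aop (cocyc θ ψ0 n x) v‖ := by
  induction n with
  | zero => simp [cocyc, Aop_one]
  | succ n ih =>
    refine ih.trans ?_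
    rw [cocyc, Aop_mul, pow_succ, mul_assoc]
    refine mul_le_mul_of_nonneg_left ?_ (by positivity)
    have := hK' ((θ : X → X)^[n] x) (Aop (ψ0 ((θ : X → X)^[n] x)) (Aop (cocyc θ ψ0 n x) v))
    rwa [Aop_inv] at this

lemma equiv_iter (E : X → Submodule ℝ (Euc d)) (hE : ∀ x, mapMat (mat (ψ0 x)) (E x) = E (θ x))
    (n : ℕ) (x : X) (v : Euc d) (hv : v ∈ E x) :
    Aop (cocyc θ ψ0 n x) v ∈ E ((θ : X → X)^[n] x) := by
  induction n with
  | zero => simpa [cocyc, Aop_one]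
  | succ n ih =>
    rw [cocyc, Aop_mul, Function.iterate_succ_apply', ← hE]
    exact (mem_mapMat _ _ _).2 ⟨_, ih, rfl⟩

lemma equiv_iter_inv (E : X → Submodule ℝ (Euc d))
    (hE : ∀ x, mapMat (mat (ψ0 x)) (E x) = E (θ x))
    (n : ℕ) (x : X) (v : Euc d) (hv : v ∈ E ((θ : X → X)^[n] x)) :
    Aop (cocyc θ ψ0 n x)⁻¹ v ∈ E x := by
  induction n generalizing v with
  | zero => simpa [cocyc, Aop_one] using hv
  | succ n ih =>
    rw [cocyc, mul_inv_rev, Aop_mul]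
    apply ih
    rw [Function.iterate_succ_apply', ← hE] at hv
    obtain ⟨w, hw, rfl⟩ := (mem_mapMat _ _ _).1 hv
    rwa [Aop_inv]

lemma exists_bundle {K : ℝ} (hK1 : 1 ≤ K)
    (hK : ∀ x v, ‖Aop (ψ0 x) v‖ ≤ K * ‖v‖)
    (hK' : ∀ x v, ‖Aop (ψ0 x)⁻¹ v‖ ≤ K * ‖v‖)
    {c r : ℝ} (hc : 0 ≤ c) (hr0 : 0 < r) (hr1 : r < 1)
    (S : ℕ → X → Submodule ℝ (Euc d)) (s : ℕ → X → ℝ) (q : ℕ)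
    (hg : ∀ n x, GapData (cocyc θ ψ0 n x) (S n x) (s n x) (c * r ^ n))
    (hq : ∀ n x, Module.finrank ℝ (S n x) = q)
    (h1 : ∀ n x, s (n+1) x ≤ K * s n x) (h2 : ∀ n x, s n x ≤ K * s (n+1) x)
    (h3 : ∀ n x, s (n+1) x ≤ K * s n (θ x)) :
    ∃ E : X → Submodule ℝ (Euc d), (∀ x, Module.finrank ℝ (E x) = q) ∧
      (∀ x, mapMat (mat (ψ0 x)) (E x) = E (θ x)) ∧
      ∃ C : ℝ, 0 ≤ C ∧ ∀ n x, Near (S n x) (E x) (C * r ^ n) ∧ Near (E x) (S n x) (C * r ^ n) := by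
  have hK0 : 0 ≤ K := by linarith
  have hrn : ∀ n : ℕ, 0 < r ^ n := fun n => pow_pos hr0 n
  have hrs : ∀ n : ℕ, r ^ (n+1) ≤ r ^ n := fun n => pow_le_pow_of_le_one hr0.le hr1.le (Nat.le_succ n)
  -- successive subspaces are close
  have n1 : ∀ n x, Near (S (n+1) x) (S n x) (K ^ 2 * c * r ^ n) := by
    intro n x v hv
    refine (hg n x).exists_near v _ ?_
    have a1 := (hg (n+1) x).le v hv
    rw [cocyc, Aop_mul] at a1
    have a2 := hK' ((θ : X → X)^[n] x) (Aop (ψ0 ((θ : X → X)^[n] x)) (Aop (cocyc θ ψ0 n x) v))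
    rw [Aop_inv] at a2
    calc _ ≤ K * (c * r ^ (n+1) * s (n+1) x * ‖v‖) :=
          a2.trans (mul_le_mul_of_nonneg_left a1 hK0)
      _ ≤ K * (c * r ^ n * (K * s n x) * ‖v‖) := by
          have := (hg (n+1) x).pos
          have := h1 n x
          have := hrs n
          have := hrn n
          gcongr
      _ = _ := by ring
  have n2 : ∀ n x, Near (S n x) (S (n+1) x) (K ^ 2 * c * r ^ n) := by
    intro n x v hv
    refine (hg (n+1) x).exists_near v _ ?_
    have a1 := (hg n x).le v hv
    rw [cocyc, Aop_mul]
    calc _ ≤ K * (c * r ^ n * s n x * ‖v‖) :=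
          (hK _ _).trans (mul_le_mul_of_nonneg_left a1 hK0)
      _ ≤ K * (c * r ^ n * (K * s (n+1) x) * ‖v‖) := by
          have := h2 n x
          have := hrn n
          gcongr
      _ = _ := by ring
  have hd : ∀ x n, dist ((S n x).starProjection) ((S (n+1) x).starProjection) ≤
      2 * (K ^ 2 * c) * r ^ n := by
    intro x n
    rw [dist_eq_norm]
    have := near_proj (by have := hrn n; positivity) (n2 n x) (n1 n x)
    linarith
  have hlim : ∀ x, ∃ P : Euc d →L[ℝ] Euc d,
      Tendsto (fun n => (S n x).starProjection) atTop (𝓝 P) := fun x =>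
    cauchySeq_tendsto_of_complete (cauchySeq_of_le_geometric r _ hr1 (hd x))
  choose P hP using hlim
  set C := 2 * (K ^ 2 * c) / (1 - r) with hC
  have h1r : 0 < 1 - r := by linarith
  have hC0 : 0 ≤ C := by positivity
  have hPd : ∀ n x v, ‖(S n x).starProjection v - P x v‖ ≤ C * r ^ n * ‖v‖ := by
    intro n x v
    have := dist_le_of_le_geometric_of_tendsto r _ hr1 (hd x) (hP x) n
    rw [dist_eq_norm] at this
    have h' := ((S n x).starProjection - P x).le_opNorm v
    rw [ContinuousLinearMap.sub_apply] at h'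
    refine h'.trans (mul_le_mul_of_nonneg_right (this.trans (le_of_eq ?_)) (norm_nonneg _))
    rw [hC]; ring
  have hPP : ∀ x v, P x (P x v) = P x v := by
    intro x v
    have t1 : Tendsto (fun n => (S n x).starProjection * (S n x).starProjection) atTop
        (𝓝 (P x * P x)) := (hP x).mul (hP x)
    have t2 : (fun n => (S n x).starProjection * (S n x).starProjection) =
        fun n => (S n x).starProjection := by
      funext n
      exact (S n x).isIdempotentElem_starProjection
    rw [t2] at t1
    have := tendsto_nhds_unique t1 (hP x)
    exact congrArg (fun A : Euc d →L[ℝ] Euc d => A v) this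
  let E : X → Submodule ℝ (Euc d) := fun x =>
    LinearMap.ker ((P x - 1 : Euc d →L[ℝ] Euc d) : Euc d →ₗ[ℝ] Euc d)
  have hE : ∀ x v, v ∈ E x ↔ P x v = v := by
    intro x v
    simp [E, LinearMap.mem_ker, sub_eq_zero]
  have m1 : ∀ n x, Near (S n x) (E x) (C * r ^ n) := by
    intro n x v hv
    refine ⟨P x v, (hE x _).2 (hPP x v), ?_⟩
    have := hPd n x v
    rwa [Submodule.starProjection_eq_self_iff.2 hv] at this
  have m2 : ∀ n x, Near (E x) (S n x) (C * r ^ n) := by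
    intro n x v hv
    refine ⟨_, (S n x).starProjection_apply_mem v, ?_⟩
    have := hPd n x v
    rwa [(hE x v).1 hv, norm_sub_rev] at this
  have hfr : ∀ x, Module.finrank ℝ (E x) = q := by
    intro x
    have ht : Tendsto (fun n : ℕ => C * r ^ n) atTop (𝓝 (C * 0)) :=
      (tendsto_pow_atTop_nhds_zero_of_lt_one hr0.le hr1).const_mul C
    rw [mul_zero] at ht
    obtain ⟨n, hn⟩ := (ht.eventually (gt_mem_nhds one_pos)).exists
    rw [← hq n x]
    exact le_antisymm (near_finrank hn (m2 n x)) (near_finrank hn (m1 n x))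
  refine ⟨E, hfr, fun x => ?_, C, hC0, fun n x => ⟨m1 n x, m2 n x⟩⟩
  refine Submodule.eq_of_le_of_finrank_eq ?_ (by rw [finrank_mapMat, hfr, hfr])
  intro y hy
  obtain ⟨v, hv, rfl⟩ := (mem_mapMat _ _ _).1 hy
  rw [hE]
  set w := Aop (ψ0 x) v with hw
  have hb : ∀ n : ℕ, ‖w - (S n (θ x)).starProjection w‖ ≤ (K * C + K * c) * ‖v‖ * r ^ n := by
    intro n
    set z := (S (n+1) x).starProjection v with hz
    have hzm : z ∈ S (n+1) x := (S (n+1) x).starProjection_apply_mem v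
    have hzn : ‖z‖ ≤ ‖v‖ := (S (n+1) x).norm_starProjection_apply_le v
    have hvz : ‖v - z‖ ≤ C * r ^ n * ‖v‖ := by
      have := hPd (n+1) x v
      rw [(hE x v).1 hv, norm_sub_rev] at this
      refine this.trans ?_
      have := hrs n
      gcongr
    have a1 := (hg (n+1) x).le z hzm
    rw [cocyc_succ', Aop_mul] at a1
    obtain ⟨y, hy, hyz⟩ := (hg n (θ x)).exists_near (Aop (ψ0 x) z) (K * c * r ^ n * ‖v‖) (by
      refine a1.trans ?_
      calc c * r ^ (n+1) * s (n+1) x * ‖z‖ ≤ c * r ^ n * (K * s n (θ x)) * ‖v‖ := by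
            have := (hg (n+1) x).pos
            have := (hg n (θ x)).pos
            have := h3 n x
            have := hrs n
            have := hrn n
            gcongr
        _ = _ := by ring)
    refine (norm_sub_proj_le _ _ y hy).trans ?_
    have e : w - y = Aop (ψ0 x) (v - z) + (Aop (ψ0 x) z - y) := by rw [map_sub, hw]; abel
    rw [e]
    refine (norm_add_le _ _).trans ?_
    have := (hK x (v - z)).trans (mul_le_mul_of_nonneg_left hvz hK0)
    linarith
  have t1 : Tendsto (fun n => ‖w - (S n (θ x)).starProjection w‖) atTop
      (𝓝 ‖w - P (θ x) w‖) := by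
    have : Tendsto (fun n => (S n (θ x)).starProjection w) atTop (𝓝 (P (θ x) w)) :=
      ((ContinuousLinearMap.apply ℝ (Euc d) w).continuous.tendsto _).comp (hP (θ x))
    exact (tendsto_const_nhds.sub this).norm
  have t2 : Tendsto (fun n : ℕ => (K * C + K * c) * ‖v‖ * r ^ n) atTop
      (𝓝 ((K * C + K * c) * ‖v‖ * 0)) :=
    (tendsto_pow_atTop_nhds_zero_of_lt_one hr0.le hr1).const_mul _
  have := le_of_tendsto_of_tendsto' t1 t2 hb
  rw [mul_zero] at this
  have := norm_le_zero_iff.1 this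
  exact (sub_eq_zero.1 this).symm

end cocycle


lemma IsSVD.sv_eq1 {d p : ℕ} {g : GL (Fin d) ℝ} {u v : OrthonormalBasis (Fin d) ℝ (Euc d)}
    {σ : Fin d → ℝ} (h : IsSVD g u v σ) (hp1 : 1 ≤ p) (hpd : p < d) :
    sv (mat g) p = σ ⟨p - 1, by omega⟩ := by
  obtain ⟨k, rfl⟩ : ∃ k, p = k + 1 := ⟨p - 1, by omega⟩
  exact h.sv_eq ⟨k, by omega⟩

lemma gapData_fwd {d p : ℕ} {g : GL (Fin d) ℝ} {u v : OrthonormalBasis (Fin d) ℝ (Euc d)}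
    {σ : Fin d → ℝ} (h : IsSVD g u v σ) (hp1 : 1 ≤ p) (hpd : p < d) {γ : ℝ}
    (hγ : sv (mat g) (p + 1) ≤ γ * sv (mat g) p) :
    GapData g (cs v (hi d p)) (sv (mat g) p) γ := by
  refine ⟨sv_pos g p hp1 hpd.le, fun x hx => ?_, fun x => ?_⟩
  · refine (h.le_of_hi ⟨p, hpd⟩ hx).trans (mul_le_mul_of_nonneg_right ?_ (norm_nonneg _))
    rw [← h.sv_eq ⟨p, hpd⟩]
    exact hγ
  · obtain ⟨z, hz, hle⟩ := h.exists_hi ⟨p - 1, by omega⟩ x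
    refine ⟨z, ?_, ?_⟩
    · have e : p - 1 + 1 = p := by omega
      simpa [e] using hz
    · rw [h.sv_eq1 hp1 hpd]
      exact hle

lemma gapData_bwd {d p : ℕ} {g : GL (Fin d) ℝ} {u v : OrthonormalBasis (Fin d) ℝ (Euc d)}
    {σ : Fin d → ℝ} (h : IsSVD g u v σ) (hp1 : 1 ≤ p) (hpd : p < d) {γ : ℝ}
    (hγ : sv (mat g) (p + 1) ≤ γ * sv (mat g) p) :
    GapData g⁻¹ (cs u (lo d p)) (sv (mat g) (p + 1))⁻¹ γ := by
  have h1 := sv_pos g (p + 1) (by omega) hpd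
  have h0 := sv_pos g p hp1 hpd.le
  refine ⟨inv_pos.2 h1, fun x hx => ?_, fun x => ?_⟩
  · have e : p - 1 + 1 = p := by omega
    refine (h.inv_le_of_lo ⟨p - 1, by omega⟩ (by simpa [e] using hx)).trans
      (mul_le_mul_of_nonneg_right ?_ (norm_nonneg _))
    rw [← h.sv_eq1 hp1 hpd, ← div_eq_mul_inv, le_div_iff₀ h1, inv_mul_le_iff₀ h0, mul_comm]
    exact hγ
  · obtain ⟨z, hz, hle⟩ := h.exists_lo ⟨p, hpd⟩ x
    refine ⟨z, hz, ?_⟩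
    rw [h.sv_eq ⟨p, hpd⟩]
    exact hle

lemma exists_K {X : Type*} [TopologicalSpace X] [CompactSpace X] {d : ℕ}
    (ψ0 : X → GL (Fin d) ℝ) (hψ : Continuous ψ0) :
    ∃ K : ℝ, 1 ≤ K ∧ (∀ x v, ‖Aop (ψ0 x) v‖ ≤ K * ‖v‖) ∧ ∀ x v, ‖Aop (ψ0 x)⁻¹ v‖ ≤ K * ‖v‖ := by
  have hcont : Continuous (fun A : Matrix (Fin d) (Fin d) ℝ =>
      (Matrix.toEuclideanCLM (𝕜 := ℝ) A : Euc d →L[ℝ] Euc d)) :=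
    LinearMap.continuous_of_finiteDimensional
      ((Matrix.toEuclideanCLM (n := Fin d) (𝕜 := ℝ)).toAlgEquiv.toLinearMap)
  have c1 : Continuous fun x => Aop (ψ0 x) := hcont.comp (Units.continuous_val.comp hψ)
  have c2 : Continuous fun x => Aop (ψ0 x)⁻¹ :=
    hcont.comp (Units.continuous_val.comp hψ.inv)
  obtain ⟨K1, h1⟩ := isCompact_univ.exists_bound_of_continuousOn c1.continuousOn
  obtain ⟨K2, h2⟩ := isCompact_univ.exists_bound_of_continuousOn c2.continuousOn
  refine ⟨max 1 (max K1 K2), le_max_left _ _, fun x v => ?_, fun x v => ?_⟩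
  · refine ((Aop (ψ0 x)).le_opNorm v).trans (mul_le_mul_of_nonneg_right ?_ (norm_nonneg _))
    exact (h1 x trivial).trans (le_max_of_le_right (le_max_left _ _))
  · refine ((Aop (ψ0 x)⁻¹).le_opNorm v).trans (mul_le_mul_of_nonneg_right ?_ (norm_nonneg _))
    exact (h2 x trivial).trans (le_max_of_le_right (le_max_right _ _))

lemma exists_EF {X : Type*} [TopologicalSpace X] {d p : ℕ} (hp1 : 1 ≤ p) (hpd : p < d)
    (θ : X ≃ₜ X) (ψ0 : X → GL (Fin d) ℝ) {K : ℝ} (hK1 : 1 ≤ K)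
    (hK : ∀ x v, ‖Aop (ψ0 x) v‖ ≤ K * ‖v‖)
    (hK' : ∀ x v, ‖Aop (ψ0 x)⁻¹ v‖ ≤ K * ‖v‖)
    {c r : ℝ} (hc : 0 ≤ c) (hr0 : 0 < r) (hr1 : r < 1)
    (U V : GL (Fin d) ℝ → OrthonormalBasis (Fin d) ℝ (Euc d))
    (Sg : GL (Fin d) ℝ → Fin d → ℝ) (hS : ∀ g, IsSVD g (U g) (V g) (Sg g))
    (hgap : ∀ n x, sv (mat (cocyc θ ψ0 n x)) (p + 1) ≤ c * r ^ n * sv (mat (cocyc θ ψ0 n x)) p) :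
    ∃ E F : X → Submodule ℝ (Euc d), (∀ x, Module.finrank ℝ (E x) = d - p) ∧
      (∀ x, Module.finrank ℝ (F x) = p) ∧
      (∀ x, mapMat (mat (ψ0 x)) (E x) = E (θ x)) ∧
      (∀ x, mapMat (mat (ψ0 x)) (F x) = F (θ x)) ∧
      ∃ C : ℝ, 0 ≤ C ∧ ∀ n x,
        Near (cs (V (cocyc θ ψ0 n x)) (hi d p)) (E x) (C * r ^ n) ∧
        Near (E x) (cs (V (cocyc θ ψ0 n x)) (hi d p)) (C * r ^ n) ∧
        Near (cs (U (cocyc θ ψ0 n ((θ.symm : X → X)^[n] x))) (lo d p)) (F x) (C * r ^ n) ∧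
        Near (F x) (cs (U (cocyc θ ψ0 n ((θ.symm : X → X)^[n] x))) (lo d p)) (C * r ^ n) := by
  have hK0 : 0 ≤ K := by linarith
  obtain ⟨E, hE1, hE2, C1, hC1, hE3⟩ := exists_bundle θ ψ0 hK1 hK hK' hc hr0 hr1
    (fun n x => cs (V (cocyc θ ψ0 n x)) (hi d p)) (fun n x => sv (mat (cocyc θ ψ0 n x)) p) (d - p)
    (fun n x => gapData_fwd (hS _) hp1 hpd (hgap n x))
    (fun n x => by rw [finrank_cs, card_hi])
    (fun n x => by
      rw [cocyc]
      exact sv_mul_left _ _ p hp1 hpd.le K (hK _) hK0)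
    (fun n x => by
      have := sv_mul_left (ψ0 ((θ : X → X)^[n] x))⁻¹ (cocyc θ ψ0 (n+1) x) p hp1 hpd.le K (hK' _) hK0
      rwa [cocyc, inv_mul_cancel_left] at this)
    (fun n x => by
      rw [cocyc_succ']
      exact sv_mul_right _ _ p hp1 hpd.le K (hK _))
  set ψ' : X → GL (Fin d) ℝ := fun y => (ψ0 (θ.symm y))⁻¹ with hψ'
  have hinv : ∀ n x, cocyc θ.symm ψ' n x = (cocyc θ ψ0 n ((θ.symm : X → X)^[n] x))⁻¹ :=
    cocyc_inv θ ψ0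
  have hp1' : 1 ≤ p + 1 := by omega
  obtain ⟨F, hF1, hF2, C2, hC2, hF3⟩ := exists_bundle θ.symm ψ' hK1
    (fun x v => hK' _ v) (fun x v => by rw [hψ', inv_inv]; exact hK _ v) hc hr0 hr1
    (fun n x => cs (U (cocyc θ ψ0 n ((θ.symm : X → X)^[n] x))) (lo d p))
    (fun n x => (sv (mat (cocyc θ ψ0 n ((θ.symm : X → X)^[n] x))) (p + 1))⁻¹) p
    (fun n x => by
      rw [hinv]
      exact gapData_bwd (hS _) hp1 hpd (hgap n _))
    (fun n x => by rw [finrank_cs, card_lo hpd.le])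
    (fun n x => by
      have := sv_mul_right (cocyc θ ψ0 (n+1) ((θ.symm : X → X)^[n+1] x))
        (ψ0 ((θ.symm : X → X)^[n+1] x))⁻¹ (p + 1) hp1' hpd K (hK' _)
      rw [cocyc_succ', mul_inv_cancel_right, Function.iterate_succ_apply', θ.apply_symm_apply,
        ← Function.iterate_succ_apply' (θ.symm : X → X)] at this
      rw [← div_eq_mul_inv, le_div_iff₀ (sv_pos _ _ hp1' hpd),
        inv_mul_le_iff₀ (sv_pos _ _ hp1' hpd), mul_comm]
      rw [cocyc_succ', Function.iterate_succ_apply', θ.apply_symm_apply]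
      rw [Function.iterate_succ_apply'] at this
      linarith)
    (fun n x => by
      have := sv_mul_right (cocyc θ ψ0 n ((θ.symm : X → X)^[n] x))
        (ψ0 ((θ.symm : X → X)^[n+1] x)) (p + 1) hp1' hpd K (hK _)
      rw [← div_eq_mul_inv, le_div_iff₀ (sv_pos _ _ hp1' hpd),
        inv_mul_le_iff₀ (sv_pos _ _ hp1' hpd), mul_comm]
      rw [cocyc_succ', Function.iterate_succ_apply', θ.apply_symm_apply]
      rw [Function.iterate_succ_apply'] at this
      linarith)
    (fun n x => by
      have := sv_mul_left (ψ0 ((θ : X → X)^[n] ((θ.symm : X → X)^[n+1] x)))⁻¹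
        (cocyc θ ψ0 (n+1) ((θ.symm : X → X)^[n+1] x)) (p + 1) hp1' hpd K (hK' _) hK0
      rw [cocyc, inv_mul_cancel_left] at this
      rw [← div_eq_mul_inv, le_div_iff₀ (sv_pos _ _ hp1' hpd),
        inv_mul_le_iff₀ (sv_pos _ _ hp1' hpd), mul_comm]
      rw [← Function.iterate_succ_apply (θ.symm : X → X), cocyc]
      linarith)
  refine ⟨E, F, hE1, hF1, hE2, fun x => ?_, max C1 C2, le_max_of_le_left hC1, fun n x => ?_⟩
  · have := hF2 (θ x)
    rw [hψ'] at this
    simp only [θ.symm_apply_apply] at this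
    ext y
    rw [← this, mem_mapMat]
    constructor
    · rintro ⟨v, hv, rfl⟩
      obtain ⟨w, hw, rfl⟩ := (mem_mapMat _ _ _).1 hv
      rwa [Aop_inv']
    · intro hy
      exact ⟨_, (mem_mapMat _ _ _).2 ⟨y, hy, rfl⟩, Aop_inv' _ _⟩
  · have mono : ∀ (S T : Submodule ℝ (Euc d)) (a : ℝ), a ≤ max C1 C2 → Near S T (a * r ^ n) →
        Near S T (max C1 C2 * r ^ n) := by
      intro S T a ha h v hv
      obtain ⟨w, hw, hle⟩ := h v hv
      refine ⟨w, hw, hle.trans ?_⟩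
      have := pow_pos hr0 n
      gcongr
    exact ⟨mono _ _ _ (le_max_left _ _) (hE3 n x).1, mono _ _ _ (le_max_left _ _) (hE3 n x).2,
      mono _ _ _ (le_max_right _ _) (hF3 n x).1, mono _ _ _ (le_max_right _ _) (hF3 n x).2⟩

lemma IsSVD.norm_map {d : ℕ} {g : GL (Fin d) ℝ} {u v : OrthonormalBasis (Fin d) ℝ (Euc d)}
    {σ : Fin d → ℝ} (h : IsSVD g u v σ) (i : Fin d) : ‖Aop g (v i)‖ = σ i := by
  rw [h.map, norm_smul, u.norm_eq_one, mul_one, Real.norm_eq_abs, abs_of_pos (h.pos i)]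

lemma doubling {X : Type*} [TopologicalSpace X] {d p : ℕ} (hp1 : 1 ≤ p) (hpd : p < d)
    (θ : X ≃ₜ X) (ψ0 : X → GL (Fin d) ℝ)
    {c r : ℝ} (hc : 0 ≤ c) (hr0 : 0 < r)
    (U V : GL (Fin d) ℝ → OrthonormalBasis (Fin d) ℝ (Euc d))
    (Sg : GL (Fin d) ℝ → Fin d → ℝ) (hS : ∀ g, IsSVD g (U g) (V g) (Sg g))
    (hgap : ∀ n x, sv (mat (cocyc θ ψ0 n x)) (p + 1) ≤ c * r ^ n * sv (mat (cocyc θ ψ0 n x)) p)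
    (E F : X → Submodule ℝ (Euc d)) (C : ℝ) (hC : 0 ≤ C)
    (hE : ∀ n x, Near (E x) (cs (V (cocyc θ ψ0 n x)) (hi d p)) (C * r ^ n))
    (hF : ∀ n x, Near (F x) (cs (U (cocyc θ ψ0 n ((θ.symm : X → X)^[n] x))) (lo d p))
      (C * r ^ n)) :
    ∃ C3 : ℝ, 1 ≤ C3 ∧ ∀ n y, ∀ e ∈ E y, ∀ f ∈ F y, e ≠ 0 → ∀ δ : ℝ, 0 ≤ δ → δ ≤ 1 / 2 →
      ‖e - f‖ ≤ δ * ‖e‖ →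
      ∏ i ∈ lo d p, Sg (cocyc θ ψ0 (n + n) ((θ.symm : X → X)^[n] y)) i ≤
        C3 * (r ^ n + δ) * ((∏ i ∈ lo d p, Sg (cocyc θ ψ0 n y) i) *
          ∏ i ∈ lo d p, Sg (cocyc θ ψ0 n ((θ.symm : X → X)^[n] y)) i) := by
  obtain ⟨Cv, hCv, hvol⟩ := vol_mul_le hp1 hpd
  refine ⟨Cv * (2 * c + 12 * C + 4), by nlinarith, fun n y e he f hf he0 δ hδ0 hδ hef => ?_⟩
  rw [cocyc_add, iter_symm]
  set h := cocyc θ ψ0 n y with hh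
  set g := cocyc θ ψ0 n ((θ.symm : X → X)^[n] y) with hg
  have hrn : 0 < r ^ n := pow_pos hr0 n
  have hratio : ∀ x, Sg (cocyc θ ψ0 n x) ⟨p, hpd⟩ / Sg (cocyc θ ψ0 n x) ⟨p - 1, by omega⟩ ≤
      c * r ^ n := by
    intro x
    have h1 := hgap n x
    have h2 := (hS (cocyc θ ψ0 n x)).sv_eq ⟨p, hpd⟩
    have h3 := (hS (cocyc θ ψ0 n x)).sv_eq1 hp1 hpd
    rw [div_le_iff₀ ((hS _).pos _), ← h3, ← h2]
    exact h1
  have hDpos : ∀ g, 0 ≤ ∏ i ∈ lo d p, Sg g i := fun g =>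
    Finset.prod_nonneg fun i _ => ((hS g).pos i).le
  obtain ⟨z, z', hz, hz', hz0, hzz⟩ : ∃ z z', z ∈ cs (U g) (lo d p) ∧ z' ∈ cs (V h) (hi d p) ∧
      z ≠ 0 ∧ ‖z - z'‖ ≤ (12 * (C * r ^ n) + 4 * δ) * ‖z‖ := by
    have hCr : 0 ≤ C * r ^ n := by positivity
    by_cases hcase : C * r ^ n ≤ 1 / 2
    · obtain ⟨z, hz, hzf⟩ := hF n y f hf
      obtain ⟨z', hz', hze⟩ := hE n y e he
      have hepos : 0 < ‖e‖ := norm_pos_iff.2 he0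
      set q := C * r ^ n with hq
      have a1 : ‖f‖ ≤ ‖e‖ + ‖e - f‖ := by
        have := norm_sub_le e (e - f)
        simpa using this
      have a2 : ‖e‖ ≤ ‖e - f‖ + ‖f‖ := by
        have := norm_add_le (e - f) f
        simpa using this
      have a3 : ‖f‖ ≤ ‖f - z‖ + ‖z‖ := by
        have := norm_add_le (f - z) z
        simpa using this
      have a4 : ‖z - z'‖ ≤ ‖f - z‖ + ‖e - f‖ + ‖e - z'‖ := by
        have e1 : z - z' = -(f - z) + -(e - f) + (e - z') := by abel
        rw [e1]
        refine (norm_add_le _ _).trans (add_le_add_left ?_ _ |>.trans (le_refl _))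
        refine (norm_add_le _ _).trans ?_
        rw [norm_neg, norm_neg]
      have b1 : ‖f‖ ≤ 2 * ‖e‖ := by nlinarith
      have b2 : ‖e‖ / 2 ≤ ‖f‖ := by nlinarith
      have b3 : ‖e‖ / 4 ≤ ‖z‖ := by nlinarith [norm_nonneg f]
      refine ⟨z, z', hz, hz', norm_pos_iff.1 (by linarith), ?_⟩
      have b4 : ‖z - z'‖ ≤ (3 * q + δ) * ‖e‖ := by nlinarith
      have b5 : (3 * q + δ) * ‖e‖ ≤ (3 * q + δ) * (4 * ‖z‖) :=
        mul_le_mul_of_nonneg_left (by linarith) (by positivity)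
      linarith
    · obtain ⟨z, hz, hz0⟩ := exists_unit (cs (U g) (lo d p)) (by
        rw [finrank_cs, card_lo hpd.le]; exact hp1)
      refine ⟨z, 0, hz, Submodule.zero_mem _, hz0, ?_⟩
      rw [sub_zero]
      push Not at hcase
      nlinarith [norm_nonneg z]
  have := hvol g h _ _ _ _ _ _ _ _ _ (hS h) (hS g) (hS (h * g)) z z' _ hz hz' hz0 hzz
  refine this.trans (mul_le_mul_of_nonneg_right ?_ (mul_nonneg (hDpos _) (hDpos _)))
  have r1 := hratio y
  have r2 := hratio ((θ.symm : X → X)^[n] y)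
  rw [← hh] at r1
  rw [← hg] at r2
  have hCv0 : 0 ≤ Cv := by linarith
  rw [mul_assoc]
  refine mul_le_mul_of_nonneg_left ?_ hCv0
  have : 0 ≤ c * δ := by positivity
  have : 0 ≤ C * δ := by positivity
  nlinarith

lemma pow_iter {r M B : ℝ} (hr0 : 0 < r) (hM : 0 ≤ M) (k : ℕ) (a : ℕ → ℕ → ℝ)
    (ha : ∀ j i, 0 ≤ a j i) (h0 : ∀ i, a 0 i ≤ B)
    (hstep : ∀ j i, i + 2 ^ (j + 1) ≤ 2 ^ k →
      a (j + 1) i ≤ M * r ^ (2 ^ j) * (a j (i + 2 ^ j) * a j i)) (j : ℕ) :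
    ∀ i, i + 2 ^ j ≤ 2 ^ k → (M * a j i) ^ 2 ≤ ((M * B) ^ 2 * r ^ j) ^ (2 ^ j) := by
  induction j with
  | zero =>
    intro i _
    have h1 := h0 i
    have h2 := ha 0 i
    simp only [pow_zero, mul_one, pow_one]
    gcongr
  | succ j ih =>
    intro i hi
    have e2 : 2 ^ (j + 1) = 2 ^ j + 2 ^ j := by ring
    have hpj : 0 < 2 ^ j := by positivity
    have h1 := ih i (by omega)
    have h2 := ih (i + 2 ^ j) (by omega)
    have h3 := hstep j i hi
    have h4 : M * a (j + 1) i ≤ r ^ (2 ^ j) * ((M * a j (i + 2 ^ j)) * (M * a j i)) := by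
      have := mul_le_mul_of_nonneg_left h3 hM
      linarith
    have h5 : 0 ≤ M * a (j + 1) i := mul_nonneg hM (ha _ _)
    calc (M * a (j + 1) i) ^ 2 ≤ (r ^ (2 ^ j) * ((M * a j (i + 2 ^ j)) * (M * a j i))) ^ 2 := by
          gcongr
      _ = (r ^ (2 ^ j)) ^ 2 * ((M * a j (i + 2 ^ j)) ^ 2 * (M * a j i) ^ 2) := by ring
      _ ≤ (r ^ (2 ^ j)) ^ 2 * (((M * B) ^ 2 * r ^ j) ^ (2 ^ j) *
            ((M * B) ^ 2 * r ^ j) ^ (2 ^ j)) := by gcongr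
      _ = _ := by
          rw [e2, pow_succ r j, ← pow_mul, ← pow_add, mul_comm (2 ^ j) 2, two_mul, ← mul_assoc,
            mul_pow _ r, mul_comm]

lemma transverse {X : Type*} [TopologicalSpace X] {d p : ℕ} (hp1 : 1 ≤ p) (hpd : p < d)
    (θ : X ≃ₜ X) (ψ0 : X → GL (Fin d) ℝ) {K : ℝ} (hK1 : 1 ≤ K)
    (hK : ∀ x v, ‖Aop (ψ0 x) v‖ ≤ K * ‖v‖)
    (hK' : ∀ x v, ‖Aop (ψ0 x)⁻¹ v‖ ≤ K * ‖v‖)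
    {c r : ℝ} (hc : 0 ≤ c) (hr0 : 0 < r) (hr1 : r < 1)
    (U V : GL (Fin d) ℝ → OrthonormalBasis (Fin d) ℝ (Euc d))
    (Sg : GL (Fin d) ℝ → Fin d → ℝ) (hS : ∀ g, IsSVD g (U g) (V g) (Sg g))
    (hgap : ∀ n x, sv (mat (cocyc θ ψ0 n x)) (p + 1) ≤ c * r ^ n * sv (mat (cocyc θ ψ0 n x)) p)
    (E F : X → Submodule ℝ (Euc d)) (C : ℝ) (hC : 0 ≤ C)
    (hE1 : ∀ x, mapMat (mat (ψ0 x)) (E x) = E (θ x))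
    (hF1 : ∀ x, mapMat (mat (ψ0 x)) (F x) = F (θ x))
    (hE : ∀ n x, Near (E x) (cs (V (cocyc θ ψ0 n x)) (hi d p)) (C * r ^ n))
    (hF : ∀ n x, Near (F x) (cs (U (cocyc θ ψ0 n ((θ.symm : X → X)^[n] x))) (lo d p))
      (C * r ^ n)) :
    ∃ α : ℝ, 0 < α ∧ ∀ x, ∀ e ∈ E x, ∀ f ∈ F x, α * ‖e‖ ≤ ‖e - f‖ := by
  obtain ⟨C3, hC3, hdbl⟩ := doubling hp1 hpd θ ψ0 hc hr0 U V Sg hS hgap E F C hC hE hF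
  have hK0 : 0 < K := by linarith
  set B := K ^ p with hB
  set M := 2 * C3 with hM
  have hM1 : 1 ≤ M := by linarith
  -- choose k
  obtain ⟨k, hk⟩ : ∃ k : ℕ, K ^ (2 * p) * ((M * B) ^ 2 * r ^ k) < 1 := by
    have ht : Tendsto (fun n : ℕ => K ^ (2 * p) * ((M * B) ^ 2 * r ^ n)) atTop
        (𝓝 (K ^ (2 * p) * ((M * B) ^ 2 * 0))) :=
      ((tendsto_pow_atTop_nhds_zero_of_lt_one hr0.le hr1).const_mul _).const_mul _
    rw [mul_zero, mul_zero] at ht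
    exact (ht.eventually (gt_mem_nhds one_pos)).exists
  refine ⟨r ^ (2 ^ k) / 2 / (K ^ (2 ^ k)) ^ 2, by positivity, fun x e he f hf => ?_⟩
  by_contra hcon
  push Not at hcon
  have he0 : e ≠ 0 := by
    rintro rfl
    simp at hcon
    exact absurd hcon (not_lt.2 (norm_nonneg _))
  have hDpos : ∀ g, 0 ≤ ∏ i ∈ lo d p, Sg g i := fun g =>
    Finset.prod_nonneg fun i _ => ((hS g).pos i).le
  have hpow : ∀ m : ℕ, m ≤ 2 ^ k →
      ‖Aop (cocyc θ ψ0 m x) e - Aop (cocyc θ ψ0 m x) f‖ ≤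
        r ^ (2 ^ k) / 2 * ‖Aop (cocyc θ ψ0 m x) e‖ := by
    intro m hm
    have h1 := cocyc_bound θ ψ0 hK1 hK m x (e - f)
    have h2 := cocyc_bound' θ ψ0 hK1 hK' m x e
    rw [map_sub] at h1
    have h3 : K ^ m ≤ K ^ (2 ^ k) := pow_le_pow_right₀ hK1 hm
    have hKp : 0 < K ^ (2 ^ k) := by positivity
    calc _ ≤ K ^ m * ‖e - f‖ := h1
      _ ≤ K ^ (2 ^ k) * (r ^ (2 ^ k) / 2 / (K ^ (2 ^ k)) ^ 2 * (K ^ (2 ^ k) *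
            ‖Aop (cocyc θ ψ0 m x) e‖)) := by
          have : ‖e‖ ≤ K ^ (2 ^ k) * ‖Aop (cocyc θ ψ0 m x) e‖ :=
            h2.trans (mul_le_mul_of_nonneg_right h3 (norm_nonneg _))
          have : ‖e - f‖ ≤ r ^ (2 ^ k) / 2 / (K ^ (2 ^ k)) ^ 2 * (K ^ (2 ^ k) *
            ‖Aop (cocyc θ ψ0 m x) e‖) :=
            hcon.le.trans (mul_le_mul_of_nonneg_left this (by positivity))
          gcongr
      _ = _ := by field_simp
  have hit := pow_iter (r := r) (M := M) (B := B) hr0 (by linarith) k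
    (fun j i => ∏ l ∈ lo d p, Sg (cocyc θ ψ0 (2 ^ j) ((θ : X → X)^[i] x)) l)
    (fun j i => hDpos _)
    (fun i => by
      simp only [pow_zero, cocyc_one]
      calc _ ≤ ∏ l ∈ lo d p, K := by
            refine Finset.prod_le_prod (fun l _ => ((hS _).pos l).le) fun l _ => ?_
            rw [← (hS _).norm_map l]
            refine (hK _ _).trans (le_of_eq ?_)
            rw [OrthonormalBasis.norm_eq_one, mul_one]
        _ = B := by rw [Finset.prod_const, card_lo hpd.le])
    (fun j i hji => by
      have e2 : 2 ^ (j + 1) = 2 ^ j + 2 ^ j := by ring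
      have hpj : 0 < 2 ^ j := by positivity
      have hm : i + 2 ^ j ≤ 2 ^ k := by omega
      have hr2 : r ^ (2 ^ k) ≤ r ^ (2 ^ j) := pow_le_pow_of_le_one hr0.le hr1.le (by omega)
      have hr3 : r ^ (2 ^ k) ≤ 1 := pow_le_one₀ hr0.le hr1.le
      have hr4 : 0 < r ^ (2 ^ k) := by positivity
      have := hdbl (2 ^ j) _ _ (equiv_iter θ ψ0 E hE1 (i + 2 ^ j) x e he) _
        (equiv_iter θ ψ0 F hF1 (i + 2 ^ j) x f hf) (Aop_ne _ he0) (r ^ (2 ^ k) / 2)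
        (by positivity) (by linarith) (hpow _ hm)
      have e3 : (θ.symm : X → X)^[2 ^ j] ((θ : X → X)^[i + 2 ^ j] x) = (θ : X → X)^[i] x := by
        rw [add_comm, Function.iterate_add_apply, symm_iter]
      rw [e3, ← e2] at this
      refine this.trans (mul_le_mul_of_nonneg_right ?_ (mul_nonneg (hDpos _) (hDpos _)))
      rw [hM]
      nlinarith)
    k 0 (by simp)
  simp only [Function.iterate_zero, id] at hit
  set D := ∏ l ∈ lo d p, Sg (cocyc θ ψ0 (2 ^ k) x) l with hD
  have hD0 : 0 ≤ D := hDpos _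
  have hlow : 1 ≤ (K ^ (2 ^ k)) ^ p * D := by
    have e1 : (K ^ (2 ^ k)) ^ p * D = ∏ l ∈ lo d p, (K ^ (2 ^ k) * Sg (cocyc θ ψ0 (2 ^ k) x) l) := by
      rw [Finset.prod_mul_distrib, Finset.prod_const, card_lo hpd.le]
    rw [e1]
    have e3 : (1 : ℝ) = ∏ _l ∈ lo d p, (1 : ℝ) := by simp
    rw [e3]
    refine Finset.prod_le_prod (fun _ _ => zero_le_one) fun l _ => ?_
    have := cocyc_bound' θ ψ0 hK1 hK' (2 ^ k) x (V (cocyc θ ψ0 (2 ^ k) x) l)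
    rwa [(hS _).norm_map, OrthonormalBasis.norm_eq_one] at this
  have h1 : D ^ 2 ≤ (M * D) ^ 2 := by
    gcongr
    nlinarith
  have h2 : 1 ≤ (K ^ (2 * p) * ((M * B) ^ 2 * r ^ k)) ^ (2 ^ k) := by
    calc (1:ℝ) ≤ ((K ^ (2 ^ k)) ^ p * D) ^ 2 := one_le_pow₀ hlow
      _ = (K ^ (2 * p)) ^ (2 ^ k) * D ^ 2 := by
          rw [mul_pow, ← pow_mul, ← pow_mul, ← pow_mul]
          congr 2
          ring
      _ ≤ (K ^ (2 * p)) ^ (2 ^ k) * ((M * B) ^ 2 * r ^ k) ^ (2 ^ k) := by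
          gcongr
          exact h1.trans hit
      _ = _ := by rw [← mul_pow]
  have h3 : (K ^ (2 * p) * ((M * B) ^ 2 * r ^ k)) ^ (2 ^ k) < 1 :=
    pow_lt_one₀ (by positivity) hk (by positivity)
  linarith

lemma exists_obasis {d : ℕ} (k : Matrix (Fin d) (Fin d) ℝ)
    (hk : k ∈ Matrix.unitaryGroup (Fin d) ℝ) :
    ∃ b : OrthonormalBasis (Fin d) ℝ (Euc d), ∀ i,
      b i = Matrix.toEuclideanCLM (𝕜 := ℝ) k (EuclideanSpace.basisFun (Fin d) ℝ i) := by
  have hu : (Matrix.toEuclideanCLM (𝕜 := ℝ) k : Euc d →L[ℝ] Euc d) ∈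
      unitary (Euc d →L[ℝ] Euc d) := by
    rw [Unitary.mem_iff] at hk ⊢
    rw [← map_star, ← map_mul, ← map_mul, hk.1, hk.2, map_one]
    exact ⟨rfl, rfl⟩
  refine ⟨(EuclideanSpace.basisFun (Fin d) ℝ).map (Unitary.linearIsometryEquiv ⟨_, hu⟩), fun i => ?_⟩
  rw [OrthonormalBasis.map_apply]
  rfl

lemma cartan_lemma {d q : ℕ} (hq1 : 1 ≤ q) (hqd : q ≤ d) (g : GL (Fin d) ℝ)
    (W : Submodule ℝ (Euc d)) (hW : IsCartanAttractor (mat g) q W)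
    (Q : Submodule ℝ (Euc d)) (hQ : Module.finrank ℝ Q = q) :
    ∃ w ∈ Q, w ≠ 0 ∧ ∀ u ∈ W, ‖Aop g⁻¹ u‖ * ‖w‖ ≤ ‖Aop g⁻¹ w‖ * ‖u‖ := by
  obtain ⟨k, l, σ, hk, hl, hanti, hnn, hg, rfl⟩ := hW
  obtain ⟨u, hu⟩ := exists_obasis k hk
  obtain ⟨v, hv⟩ := exists_obasis (star l) (Unitary.star_mem hl)
  have hmap : ∀ i, Aop g (v i) = σ i • u i := by
    intro i
    have e1 : mat g * star l = k * Matrix.diagonal σ := by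
      rw [hg, mul_assoc, (Unitary.mem_iff.1 hl).2, mul_one]
    have e2 : Aop g (v i) = Matrix.toEuclideanCLM (𝕜 := ℝ) (mat g * star l)
        (EuclideanSpace.basisFun (Fin d) ℝ i) := by
      rw [hv, map_mul]; rfl
    have e3 : Matrix.toEuclideanCLM (𝕜 := ℝ) (Matrix.diagonal σ)
        (EuclideanSpace.basisFun (Fin d) ℝ i) = σ i • EuclideanSpace.basisFun (Fin d) ℝ i := by
      ext j
      simp [Matrix.ofLp_toEuclideanCLM, Matrix.mulVec_diagonal, Pi.single_apply]
      split_ifs with hji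
      · rw [hji]
      · rfl
    rw [e2, e1, map_mul, hu]
    change Matrix.toEuclideanCLM (𝕜 := ℝ) k (Matrix.toEuclideanCLM (𝕜 := ℝ) (Matrix.diagonal σ)
      (EuclideanSpace.basisFun (Fin d) ℝ i)) = _
    rw [e3, map_smul]
  have hsvd : IsSVD g u v σ := by
    refine ⟨fun i j hij => hanti i j hij, fun i => ?_, hmap⟩
    refine lt_of_le_of_ne (hnn i) fun h0 => ?_
    have h1 := hmap i
    rw [← h0, zero_smul] at h1
    have h2 := Aop_inj g (h1.trans (map_zero _).symm)
    have h3 := v.norm_eq_one i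
    rw [h2, norm_zero] at h3
    exact zero_ne_one h3
  obtain ⟨w, hw, hw', hw0⟩ := exists_mem_inf Q (cs u (hi d (q - 1))) (by
    rw [hQ, finrank_cs, card_hi]; omega)
  refine ⟨w, hw, hw0, fun x hx => ?_⟩
  have hx' : x ∈ cs u (lo d (q - 1 + 1)) := by
    have e : q - 1 + 1 = q := by omega
    rw [e]
    refine Submodule.span_le.2 ?_ hx
    rintro y ⟨i, hi, rfl⟩
    refine Submodule.subset_span ⟨⟨i, mem_lo.2 hi⟩, ?_⟩
    change u i = _
    rw [hu]
    ext j
    simp [Matrix.ofLp_toEuclideanCLM]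
  have h1 := hsvd.inv_le_of_lo ⟨q - 1, by omega⟩ hx'
  have h2 := hsvd.inv_ge_of_hi ⟨q - 1, by omega⟩ hw'
  set s := (σ ⟨q - 1, by omega⟩)⁻¹
  calc _ ≤ s * ‖x‖ * ‖w‖ := mul_le_mul_of_nonneg_right h1 (norm_nonneg _)
    _ = s * ‖w‖ * ‖x‖ := by ring
    _ ≤ _ := mul_le_mul_of_nonneg_right h2 (norm_nonneg _)

lemma sinAngle_mul_le {d : ℕ} (v w : Euc d) (hw : w ≠ 0) : sinAngle v w * ‖v‖ ≤ ‖v - w‖ := by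
  have hwp : 0 < ‖w‖ := norm_pos_iff.2 hw
  have h := InnerProductGeometry.sin_angle_mul_norm_mul_norm v w
  have h1 : √(inner ℝ v v * inner ℝ w w - inner ℝ v w * inner ℝ v w) ≤ ‖v - w‖ * ‖w‖ := by
    refine Real.sqrt_le_iff.2 ⟨by positivity, ?_⟩
    rw [mul_pow, norm_sub_sq_real, real_inner_self_eq_norm_sq, real_inner_self_eq_norm_sq]
    nlinarith [sq_nonneg (‖w‖ ^ 2 - inner ℝ v w)]
  rw [← h, ← mul_assoc] at h1
  exact le_of_mul_le_mul_right h1 hwp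

lemma grassDist_le {d : ℕ} (P Q : Submodule ℝ (Euc d)) (δ : ℝ) (h0 : 0 ≤ δ) (h1 : δ < 1)
    (h : Near P Q δ) : grassDist P Q ≤ δ := by
  refine Real.sSup_le ?_ h0
  rintro _ ⟨v, hv, hv0, rfl⟩
  obtain ⟨w, hw, hvw⟩ := h v hv
  have hvp : 0 < ‖v‖ := norm_pos_iff.2 hv0
  have hw0 : w ≠ 0 := by
    rintro rfl
    rw [sub_zero] at hvw
    nlinarith
  have hb : BddBelow { s | ∃ w ∈ Q, w ≠ 0 ∧ s = sinAngle v w } := by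
    refine ⟨0, ?_⟩
    rintro _ ⟨w, _, _, rfl⟩
    exact InnerProductGeometry.sin_angle_nonneg _ _
  refine le_trans (b := sinAngle v w) (csInf_le hb ⟨w, hw, hw0, rfl⟩) ?_
  · exact le_of_mul_le_mul_right ((sinAngle_mul_le v w hw0).trans hvw) hvp

lemma near_cartan {d q : ℕ} (g : GL (Fin d) ℝ) (Q : Submodule ℝ (Euc d)) (δ : ℝ)
    (h : ∀ W, IsCartanAttractor (mat g) q W → Near W Q δ) :
    Near (cartanAttractor (mat g) q) Q δ := by
  unfold cartanAttractor
  split_ifs with hex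
  · exact h _ hex.choose_spec
  · intro v hv
    rw [Submodule.mem_bot] at hv
    subst hv
    exact ⟨0, Q.zero_mem, by simp⟩

lemma exp_pow (μ : ℝ) (n : ℕ) : Real.exp (-μ * (n : ℝ)) = Real.exp (-μ) ^ n := by
  rw [← Real.exp_nat_mul, mul_comm]

lemma split_to_gap {X : Type*} [TopologicalSpace X] {d p : ℕ} (hp1 : 1 ≤ p) (hpd : p < d)
    (θ : X ≃ₜ X) (ψ0 : X → GL (Fin d) ℝ) (Ef Ff : X → Submodule ℝ (Euc d))
    (h : IsDominatedSplitting θ ψ0 p Ef Ff) :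
    ∃ c > (0 : ℝ), ∃ μ > (0 : ℝ), ∀ x : X, ∀ n : ℕ,
        sv (mat (cocyc θ ψ0 n x)) (p + 1) / sv (mat (cocyc θ ψ0 n x)) p ≤
          c * Real.exp (-μ * (n : ℝ)) := by
  obtain ⟨hF, hcompl, -, -, c, hc, μ, hμ, hdom⟩ := h
  refine ⟨c, hc, μ, hμ, fun x n => ?_⟩
  set g := cocyc θ ψ0 n x with hg
  have hE : Module.finrank ℝ (Ef x) = d - p := by
    have := Submodule.finrank_add_eq_of_isCompl (hcompl x)
    rw [hF, finrank_euclideanSpace_fin] at this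
    omega
  obtain ⟨w, hw, hw0, hw1⟩ := sv_exists_le g p hp1 hpd.le (Ff x) (hF x)
  obtain ⟨P, hP, hP1⟩ := sv_exists_ge g (p + 1) (by omega) hpd
  obtain ⟨u, hu, hu', hu0⟩ := exists_mem_inf P (Ef x) (by omega)
  have h1 := hP1 u hu
  have h2 := hdom x n u hu' hu0 w hw hw0
  rw [act_eq, act_eq, ← hg] at h2
  have hup : 0 < ‖u‖ := norm_pos_iff.2 hu0
  have hwp : 0 < ‖w‖ := norm_pos_iff.2 hw0
  rw [div_le_iff₀ (sv_pos g p hp1 hpd.le)]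
  rw [← le_div_iff₀ hup] at h1
  rw [← div_le_iff₀ hwp] at hw1
  refine (h1.trans h2).trans (mul_le_mul_of_nonneg_left hw1 (by positivity))

lemma dom_lower {d : ℕ} {g : GL (Fin d) ℝ} {S E : Submodule ℝ (Euc d)} {s γ η α : ℝ}
    (h : GapData g S s γ) (hn : Near S E η) (h0 : 0 ≤ η) (h1 : η ≤ 1) (h2 : η ≤ α / 2) (w : Euc d)
    (hw : ∀ e ∈ E, α * ‖w‖ ≤ ‖w - e‖) : α / 4 * s * ‖w‖ ≤ ‖Aop g w‖ := by
  obtain ⟨z, hz, hle⟩ := h.ge w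
  obtain ⟨e, he, hze⟩ := hn z hz
  have a1 := hw e he
  have a2 : ‖w - e‖ ≤ ‖w - z‖ + ‖z - e‖ := by
    have := norm_add_le (w - z) (z - e)
    simpa using this
  have a3 : ‖z‖ ≤ ‖w‖ + ‖w - z‖ := by
    have := norm_sub_le w (w - z)
    simpa using this
  have a4 : α / 4 * ‖w‖ ≤ ‖w - z‖ := by
    have b1 : η * ‖z‖ ≤ η * ‖w‖ + η * ‖w - z‖ := by nlinarith
    have b2 : η * ‖w‖ ≤ α / 2 * ‖w‖ := mul_le_mul_of_nonneg_right h2 (norm_nonneg _)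
    have b3 : η * ‖w - z‖ ≤ 1 * ‖w - z‖ := mul_le_mul_of_nonneg_right h1 (norm_nonneg _)
    linarith
  calc _ = s * (α / 4 * ‖w‖) := by ring
    _ ≤ s * ‖w - z‖ := mul_le_mul_of_nonneg_left a4 h.pos.le
    _ ≤ _ := hle

lemma gap_to_split {X : Type*} [TopologicalSpace X] {d p : ℕ} (hp1 : 1 ≤ p) (hpd : p < d)
    (θ : X ≃ₜ X) (ψ0 : X → GL (Fin d) ℝ) {K : ℝ} (hK1 : 1 ≤ K)
    (hK : ∀ x v, ‖Aop (ψ0 x) v‖ ≤ K * ‖v‖)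
    (hK' : ∀ x v, ‖Aop (ψ0 x)⁻¹ v‖ ≤ K * ‖v‖)
    {c μ : ℝ} (hc : 0 < c) (hμ : 0 < μ)
    (hgap0 : ∀ x : X, ∀ n : ℕ,
        sv (mat (cocyc θ ψ0 n x)) (p + 1) / sv (mat (cocyc θ ψ0 n x)) p ≤
          c * Real.exp (-μ * (n : ℝ))) :
    ∃ Ef Ff : X → Submodule ℝ (Euc d), IsDominatedSplitting θ ψ0 p Ef Ff := by
  set r := Real.exp (-μ) with hr
  have hr0 : 0 < r := Real.exp_pos _
  have hr1 : r < 1 := by rw [hr, Real.exp_lt_one_iff]; linarith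
  have hK0 : 0 < K := by linarith
  have hgap : ∀ n x, sv (mat (cocyc θ ψ0 n x)) (p + 1) ≤
      c * r ^ n * sv (mat (cocyc θ ψ0 n x)) p := by
    intro n x
    have := hgap0 x n
    rwa [exp_pow, div_le_iff₀ (sv_pos _ p hp1 hpd.le)] at this
  choose U V Sg hS using exists_svd (show 0 < d by omega)
  obtain ⟨E, F, hE1, hF1, hE2, hF2, C, hC, hnear⟩ :=
    exists_EF hp1 hpd θ ψ0 hK1 hK hK' hc.le hr0 hr1 U V Sg hS hgap
  obtain ⟨α, hα, htr⟩ := transverse hp1 hpd θ ψ0 hK1 hK hK' hc.le hr0 hr1 U V Sg hS hgap E F C hC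
    hE2 hF2 (fun n x => (hnear n x).2.1) (fun n x => (hnear n x).2.2.2)
  have hcompl : ∀ x, IsCompl (E x) (F x) := by
    intro x
    rw [Submodule.isCompl_iff_disjoint _ _ (by
      rw [hE1, hF1, finrank_euclideanSpace_fin]; omega), Submodule.disjoint_def]
    intro v hv hv'
    have := htr x v hv v hv'
    rw [sub_self, norm_zero] at this
    exact norm_le_zero_iff.1 (by nlinarith [norm_nonneg v])
  set β := α / (1 + α) with hβ
  have hβ0 : 0 < β := by positivity
  have hβα : β ≤ α := div_le_self hα.le (by linarith)
  have tE : ∀ x, ∀ e ∈ E x, ∀ f ∈ F x, β * ‖e‖ ≤ ‖e - f‖ := fun x e he f hf =>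
    (mul_le_mul_of_nonneg_right hβα (norm_nonneg _)).trans (htr x e he f hf)
  have tF : ∀ x, ∀ f ∈ F x, ∀ e ∈ E x, β * ‖f‖ ≤ ‖f - e‖ := by
    intro x f hf e he
    have h1 := htr x e he f hf
    have h2 : ‖f‖ ≤ ‖e‖ + ‖e - f‖ := by
      have := norm_sub_le e (e - f)
      simpa using this
    rw [norm_sub_rev f e, hβ, div_mul_eq_mul_div, div_le_iff₀ (by linarith)]
    nlinarith
  obtain ⟨n0, hn0⟩ : ∃ n0 : ℕ, ∀ n ≥ n0, C * r ^ n < min 1 (β / 2) := by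
    have ht : Tendsto (fun n : ℕ => C * r ^ n) atTop (𝓝 (C * 0)) :=
      (tendsto_pow_atTop_nhds_zero_of_lt_one hr0.le hr1).const_mul _
    rw [mul_zero] at ht
    exact eventually_atTop.1 (ht.eventually (gt_mem_nhds (lt_min one_pos (by positivity))))
  refine ⟨E, F, hF1, hcompl, hE2, hF2, 16 / β ^ 2 * c + (K ^ n0) ^ 2 / r ^ n0, by positivity,
    μ, hμ, fun x n u hu hu0 w hw hw0 => ?_⟩
  rw [exp_pow, ← hr, act_eq, act_eq]
  set g := cocyc θ ψ0 n x with hg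
  have hup : 0 < ‖u‖ := norm_pos_iff.2 hu0
  have hwp : 0 < ‖w‖ := norm_pos_iff.2 hw0
  have hrn : 0 < r ^ n := by positivity
  set t := ‖Aop g w‖ / ‖w‖ with ht
  have ht0 : 0 ≤ t := by positivity
  by_cases hn : n0 ≤ n
  · have hsmall := hn0 n hn
    have s1 : C * r ^ n ≤ 1 := (hsmall.trans_le (min_le_left _ _)).le
    have s2 : C * r ^ n ≤ β / 2 := (hsmall.trans_le (min_le_right _ _)).le
    have s0 : 0 ≤ C * r ^ n := by positivity
    have A := dom_lower (gapData_fwd (hS g) hp1 hpd (hgap n x)) (hnear n x).1 s0 s1 s2 w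
      (tF x w hw)
    have hu' : Aop g u ∈ E ((θ : X → X)^[n] x) := equiv_iter θ ψ0 E hE2 n x u hu
    have hnb := (hnear n ((θ : X → X)^[n] x)).2.2.1
    rw [symm_iter, ← hg] at hnb
    have B := dom_lower (gapData_bwd (hS g) hp1 hpd (hgap n x)) hnb s0 s1 s2 (Aop g u)
      (tE _ _ hu')
    rw [Aop_inv] at B
    have q1 := sv_pos g (p + 1) (by omega) hpd
    have q0 := sv_pos g p hp1 hpd.le
    have hgp : sv (mat g) (p + 1) ≤ c * r ^ n * sv (mat g) p := hgap n x
    have A' : β / 4 * sv (mat g) p ≤ t := by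
      rw [ht, le_div_iff₀ hwp]; exact A
    have B' : ‖Aop g u‖ / ‖u‖ ≤ 4 / β * sv (mat g) (p + 1) := by
      rw [div_le_iff₀ hup]
      have : β / 4 * (sv (mat g) (p + 1))⁻¹ * ‖Aop g u‖ * (4 / β * sv (mat g) (p + 1)) =
        ‖Aop g u‖ := by field_simp
      rw [← this, mul_comm]
      exact mul_le_mul_of_nonneg_left B (by positivity)
    calc ‖Aop g u‖ / ‖u‖ ≤ 4 / β * (c * r ^ n * sv (mat g) p) :=
          B'.trans (mul_le_mul_of_nonneg_left hgp (by positivity))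
      _ = 16 / β ^ 2 * c * r ^ n * (β / 4 * sv (mat g) p) := by field_simp; ring
      _ ≤ 16 / β ^ 2 * c * r ^ n * t := mul_le_mul_of_nonneg_left A' (by positivity)
      _ ≤ _ := by
          have : 0 ≤ (K ^ n0) ^ 2 / r ^ n0 := by positivity
          refine mul_le_mul_of_nonneg_right ?_ ht0
          refine mul_le_mul_of_nonneg_right ?_ hrn.le
          linarith
  · push Not at hn
    have h1 := cocyc_bound θ ψ0 hK1 hK n x u
    have h2 := cocyc_bound' θ ψ0 hK1 hK' n x w
    have hKn : K ^ n ≤ K ^ n0 := pow_le_pow_right₀ hK1 hn.le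
    have hrn0 : r ^ n0 ≤ r ^ n := pow_le_pow_of_le_one hr0.le hr1.le hn.le
    have h3 : ‖Aop g u‖ / ‖u‖ ≤ K ^ n0 := by
      rw [div_le_iff₀ hup]
      exact h1.trans (mul_le_mul_of_nonneg_right hKn hup.le)
    have h4 : 1 ≤ K ^ n0 * t := by
      rw [ht, ← mul_div_assoc, le_div_iff₀ hwp, one_mul]
      exact h2.trans (mul_le_mul_of_nonneg_right hKn (norm_nonneg _))
    calc ‖Aop g u‖ / ‖u‖ ≤ K ^ n0 * (K ^ n0 * t) := by
          refine h3.trans (le_mul_of_one_le_right (by positivity) h4)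
      _ = (K ^ n0) ^ 2 * t * 1 := by ring
      _ ≤ (K ^ n0) ^ 2 * t * (r ^ n / r ^ n0) := by
          refine mul_le_mul_of_nonneg_left ?_ (by positivity)
          rw [le_div_iff₀ (by positivity), one_mul]
          exact hrn0
      _ = (K ^ n0) ^ 2 / r ^ n0 * r ^ n * t := by ring
      _ ≤ _ := by
          have : 0 ≤ 16 / β ^ 2 * c := by positivity
          refine mul_le_mul_of_nonneg_right ?_ ht0
          refine mul_le_mul_of_nonneg_right ?_ hrn.le
          linarith

lemma splitting_angle {X : Type*} [TopologicalSpace X] {d : ℕ}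
    (θ : X ≃ₜ X) (ψ0 : X → GL (Fin d) ℝ) {K : ℝ} (hK1 : 1 ≤ K)
    (hK : ∀ x v, ‖Aop (ψ0 x) v‖ ≤ K * ‖v‖)
    (hK' : ∀ x v, ‖Aop (ψ0 x)⁻¹ v‖ ≤ K * ‖v‖)
    (E F : X → Submodule ℝ (Euc d)) (N : ℕ)
    (hN : ∀ x, ∀ e ∈ E x, ∀ f ∈ F x,
      ‖Aop (cocyc θ ψ0 N x) e‖ * ‖f‖ ≤ 1 / 2 * ‖Aop (cocyc θ ψ0 N x) f‖ * ‖e‖) :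
    ∃ C : ℝ, 0 < C ∧ ∀ x, ∀ e ∈ E x, ∀ f ∈ F x, ‖e‖ ≤ C * ‖e + f‖ ∧ ‖f‖ ≤ C * ‖e + f‖ := by
  set M := K ^ N with hM
  have hM1 : 1 ≤ M := one_le_pow₀ hK1
  have hMM : 1 ≤ M ^ 2 := one_le_pow₀ hM1
  have main : ∀ x, ∀ e ∈ E x, ∀ f ∈ F x, ‖e‖ ≤ 3 * M ^ 2 * ‖e + f‖ := by
    intro x e he f hf
    by_contra hcon
    push Not at hcon
    have h0 := hN x e he f hf
    set g := cocyc θ ψ0 N x with hg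
    have b1 := cocyc_bound θ ψ0 hK1 hK N x (e + f)
    have b2 := cocyc_bound' θ ψ0 hK1 hK' N x e
    rw [← hg, ← hM] at b1 b2
    have b3 : ‖Aop g f‖ ≤ ‖Aop g e‖ + ‖Aop g (e + f)‖ := by
      have := norm_sub_le (Aop g (e + f)) (Aop g e)
      rw [map_add, add_sub_cancel_left] at this
      rw [map_add]
      linarith
    have b4 : ‖e‖ ≤ ‖f‖ + ‖e + f‖ := by
      have := norm_sub_le (e + f) f
      rw [add_sub_cancel_right] at this
      linarith
    have hs0 := norm_nonneg (e + f)
    have hf0 := norm_nonneg f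
    have he0 := norm_nonneg e
    have ha0 := norm_nonneg (Aop g e)
    generalize ‖e + f‖ = s at *
    generalize ‖e‖ = a at *
    generalize ‖f‖ = b at *
    generalize ‖Aop g e‖ = A at *
    generalize ‖Aop g f‖ = B at *
    generalize ‖Aop g (e + f)‖ = D at *
    have hMs : s ≤ M ^ 2 * s := le_mul_of_one_le_left hs0 hMM
    have hapos : 0 < a := by nlinarith
    -- f is large compared with s
    have hb2 : 2 * s ≤ b := by linarith
    have h1 : A * (b - s) ≤ M * s * (b + s) := by
      have k1 : B * a ≤ (A + M * s) * (b + s) := by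
        refine mul_le_mul (by linarith) b4 he0 ?_
        have : 0 ≤ M * s := by positivity
        linarith
      linarith
    have h2 : a * (b - s) ≤ M ^ 2 * s * (b + s) := by
      have k1 : a * (b - s) ≤ M * A * (b - s) := mul_le_mul_of_nonneg_right b2 (by linarith)
      have k2 := mul_le_mul_of_nonneg_left h1 (show 0 ≤ M by linarith)
      linarith
    have h3 : M ^ 2 * s * (b + s) ≤ a / 3 * (b + s) :=
      mul_le_mul_of_nonneg_right (by linarith) (by linarith)
    have h4 : a * (b - s) ≤ a * ((b + s) / 3) := by linarith
    have h5 := le_of_mul_le_mul_left h4 hapos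
    have : b ≤ 2 * s := by linarith
    linarith
  refine ⟨3 * M ^ 2 + 1, by positivity, fun x e he f hf => ?_⟩
  have h1 := main x e he f hf
  have h2 : ‖f‖ ≤ ‖e + f‖ + ‖e‖ := by
    have := norm_sub_le (e + f) e
    rwa [add_sub_cancel_left] at this
  have := norm_nonneg (e + f)
  constructor <;> linarith

lemma split_limits {X : Type*} [TopologicalSpace X] {d p : ℕ} (hp1 : 1 ≤ p) (hpd : p < d)
    (θ : X ≃ₜ X) (ψ0 : X → GL (Fin d) ℝ) {K : ℝ} (hK1 : 1 ≤ K)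
    (hK : ∀ x v, ‖Aop (ψ0 x) v‖ ≤ K * ‖v‖)
    (hK' : ∀ x v, ‖Aop (ψ0 x)⁻¹ v‖ ≤ K * ‖v‖)
    (Ef Ff : X → Submodule ℝ (Euc d)) (h : IsDominatedSplitting θ ψ0 p Ef Ff)
    (ε : ℝ) (hε : 0 < ε) :
    ∃ N : ℕ, ∀ n : ℕ, N ≤ n → ∀ x : X,
        grassDist (cartanAttractor (mat (cocyc θ ψ0 n ((θ.symm : X → X)^[n] x))) p)
            (Ff x) < ε ∧
        grassDist (cartanAttractor (mat ((cocyc θ ψ0 n x)⁻¹)) (d - p)) (Ef x) < ε := by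
  obtain ⟨hF, hcompl, hE2, hF2, c, hc, μ, hμ, hdom0⟩ := h
  set r := Real.exp (-μ) with hr
  have hr0 : 0 < r := Real.exp_pos _
  have hr1 : r < 1 := by rw [hr, Real.exp_lt_one_iff]; linarith
  have hE : ∀ x, Module.finrank ℝ (Ef x) = d - p := by
    intro x
    have := Submodule.finrank_add_eq_of_isCompl (hcompl x)
    rw [hF, finrank_euclideanSpace_fin] at this
    omega
  have hdom : ∀ n x, ∀ e ∈ Ef x, ∀ f ∈ Ff x,
      ‖Aop (cocyc θ ψ0 n x) e‖ * ‖f‖ ≤ c * r ^ n * ‖Aop (cocyc θ ψ0 n x) f‖ * ‖e‖ := by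
    intro n x e he f hf
    by_cases he0 : e = 0
    · simp [he0]
    by_cases hf0 : f = 0
    · simp [hf0]
    have := hdom0 x n e he he0 f hf hf0
    have hep : 0 < ‖e‖ := norm_pos_iff.2 he0
    have hfp : 0 < ‖f‖ := norm_pos_iff.2 hf0
    rw [exp_pow, act_eq, act_eq, ← hr, ← mul_div_assoc, div_le_div_iff₀ hep hfp] at this
    exact this
  have hlim : ∀ C : ℝ, Tendsto (fun n : ℕ => c * r ^ n * C) atTop (𝓝 0) := by
    intro C
    have := ((tendsto_pow_atTop_nhds_zero_of_lt_one hr0.le hr1).const_mul c).mul_const C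
    simpa using this
  obtain ⟨N0, hN0⟩ := ((hlim 1).eventually (gt_mem_nhds (show (0:ℝ) < 1 / 2 by norm_num))).exists
  obtain ⟨C, hC, hang⟩ := splitting_angle θ ψ0 hK1 hK hK' Ef Ff N0 (fun x e he f hf => by
    refine (hdom N0 x e he f hf).trans ?_
    rw [mul_one] at hN0
    gcongr)
  obtain ⟨N, hN⟩ := eventually_atTop.1 ((hlim C).eventually
    (gt_mem_nhds (show (0:ℝ) < min 1 ε from lt_min one_pos hε)))
  have hdec : ∀ x u, ∃ e ∈ Ef x, ∃ f ∈ Ff x, e + f = u := by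
    intro x u
    have : u ∈ Ef x ⊔ Ff x := by rw [(hcompl x).sup_eq_top]; trivial
    exact Submodule.mem_sup.1 this
  refine ⟨N, fun n hn x => ?_⟩
  have hδ := hN n hn
  have hδ1 : c * r ^ n * C < 1 := hδ.trans_le (min_le_left _ _)
  have hδε : c * r ^ n * C < ε := hδ.trans_le (min_le_right _ _)
  have hδ0 : 0 ≤ c * r ^ n * C := by positivity
  have hcr : 0 ≤ c * r ^ n := by positivity
  constructor
  · refine (grassDist_le _ _ _ hδ0 hδ1 (near_cartan _ _ _ fun W hW => ?_)).trans_lt hδε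
    set y := (θ.symm : X → X)^[n] x with hy
    have hyx : (θ : X → X)^[n] y = x := iter_symm θ n x
    set g := cocyc θ ψ0 n y with hg
    obtain ⟨w, hw, hw0, hwW⟩ := cartan_lemma hp1 hpd.le g W hW (Ff x) (hF x)
    intro u hu
    obtain ⟨e, he, f, hf, rfl⟩ := hdec x u
    refine ⟨f, hf, ?_⟩
    rw [add_sub_cancel_right]
    have h1 := hwW _ hu
    have he' : Aop g⁻¹ e ∈ Ef y := equiv_iter_inv θ ψ0 Ef hE2 n y e (by rwa [hyx])
    have hf' : Aop g⁻¹ f ∈ Ff y := equiv_iter_inv θ ψ0 Ff hF2 n y f (by rwa [hyx])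
    have hw' : Aop g⁻¹ w ∈ Ff y := equiv_iter_inv θ ψ0 Ff hF2 n y w (by rwa [hyx])
    have h2 := hdom n y _ he' _ hw'
    rw [← hg, Aop_inv', Aop_inv'] at h2
    have h3 := (hang y _ he' _ hf').1
    rw [← map_add] at h3
    have hpos : 0 < ‖Aop g⁻¹ w‖ := norm_pos_iff.2 (Aop_ne _ hw0)
    refine le_of_mul_le_mul_right ?_ hpos
    calc _ ≤ c * r ^ n * ‖w‖ * ‖Aop g⁻¹ e‖ := h2
      _ ≤ c * r ^ n * ‖w‖ * (C * ‖Aop g⁻¹ (e + f)‖) :=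
          mul_le_mul_of_nonneg_left h3 (by positivity)
      _ = c * r ^ n * C * (‖Aop g⁻¹ (e + f)‖ * ‖w‖) := by ring
      _ ≤ c * r ^ n * C * (‖Aop g⁻¹ w‖ * ‖e + f‖) := mul_le_mul_of_nonneg_left h1 hδ0
      _ = _ := by ring
  · refine (grassDist_le _ _ _ hδ0 hδ1 (near_cartan _ _ _ fun W hW => ?_)).trans_lt hδε
    set g := cocyc θ ψ0 n x with hg
    obtain ⟨w, hw, hw0, hwW⟩ := cartan_lemma (q := d - p) (by omega) (by omega) g⁻¹ W hW
      (Ef x) (hE x)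
    rw [inv_inv] at hwW
    intro u hu
    obtain ⟨e, he, f, hf, rfl⟩ := hdec x u
    refine ⟨e, he, ?_⟩
    rw [add_sub_cancel_left]
    have h1 := hwW _ hu
    have h2 := hdom n x w hw f hf
    rw [← hg] at h2
    have h3 := (hang _ _ (equiv_iter θ ψ0 Ef hE2 n x e he) _ (equiv_iter θ ψ0 Ff hF2 n x f hf)).2
    rw [← hg, ← map_add] at h3
    have hpos : 0 < ‖Aop g w‖ := norm_pos_iff.2 (Aop_ne _ hw0)
    refine le_of_mul_le_mul_right ?_ hpos
    calc _ = ‖Aop g w‖ * ‖f‖ := mul_comm _ _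
      _ ≤ c * r ^ n * ‖Aop g f‖ * ‖w‖ := h2
      _ ≤ c * r ^ n * (C * ‖Aop g (e + f)‖) * ‖w‖ := by gcongr
      _ = c * r ^ n * C * (‖Aop g (e + f)‖ * ‖w‖) := by ring
      _ ≤ c * r ^ n * C * (‖Aop g w‖ * ‖e + f‖) := mul_le_mul_of_nonneg_left h1 hδ0
      _ = _ := by ring

/-- Theorem 2.4 (Bochi–Gourmelon): a cocycle over a compact base admits a dominated
splitting of index `p` iff the singular value gap `σ_{p+1}/σ_p` of the products
decays uniformly exponentially; in that case the bundles are the uniform limits of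
the Cartan attractors `F_x = lim U_p(ψ^n_{θ^{-n} x})`, `E_x = lim U_{d-p}((ψ^n_x)⁻¹)`. -/
theorem stmt19 {X : Type*} [MetricSpace X] [CompactSpace X] {d : ℕ}
    (θ : X ≃ₜ X) (ψ0 : X → GL (Fin d) ℝ) (hψ : Continuous ψ0)
    (p : ℕ) (hp1 : 1 ≤ p) (hpd : p ≤ d - 1) :
    ((∃ Ef Ff : X → Submodule ℝ (Euc d), IsDominatedSplitting θ ψ0 p Ef Ff) ↔
      ∃ c > (0 : ℝ), ∃ μ > (0 : ℝ), ∀ x : X, ∀ n : ℕ,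
        sv (mat (cocyc θ ψ0 n x)) (p + 1) / sv (mat (cocyc θ ψ0 n x)) p ≤
          c * Real.exp (-μ * (n : ℝ))) ∧
    (∀ Ef Ff : X → Submodule ℝ (Euc d), IsDominatedSplitting θ ψ0 p Ef Ff →
      ∀ ε > (0 : ℝ), ∃ N : ℕ, ∀ n : ℕ, N ≤ n → ∀ x : X,
        grassDist (cartanAttractor (mat (cocyc θ ψ0 n ((θ.symm : X → X)^[n] x))) p)
            (Ff x) < ε ∧
        grassDist (cartanAttractor (mat ((cocyc θ ψ0 n x)⁻¹)) (d - p)) (Ef x) < ε) := by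
  have hpd' : p < d := by omega
  obtain ⟨K, hK1, hK, hK'⟩ := exists_K ψ0 hψ
  refine ⟨⟨?_, ?_⟩, ?_⟩
  · rintro ⟨Ef, Ff, h⟩
    exact split_to_gap hp1 hpd' θ ψ0 Ef Ff h
  · rintro ⟨c, hc, μ, hμ, hgap⟩
    exact gap_to_split hp1 hpd' θ ψ0 hK1 hK hK' hc hμ hgap
  · intro Ef Ff h ε hε
    exact split_limits hp1 hpd' θ ψ0 hK1 hK hK' Ef Ff h ε hε

end Paper
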